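/- Let (F₁,F₂) be a nonsingular pair of quadratic forms in s variables with integer coefficients. (i) If s ≥ 7, then the singular series converges absolutely: Σ_{q=1}^∞ q^{−s} |D_q(0)| < ∞. (ii) If s ≥ 6 and w ∈ C_c^∞(ℝ^s), then the singular integral converges absolutely: with J(α) = ∫_{ℝ^s} w(x) e(α₁F₁(x) + α₂F₂(x)) dx for α ∈ ℝ², one has ∫_{ℝ²} |J(α)| dα < ∞. -/

import Mathlib

open MeasureTheory Real Matrix Finset

noncomputable section

/-- `e(x) = exp(2πix)`. -/
def e2pi (x : ℝ) : ℂ := Complex.exp (2 * Real.pi * Complex.I * x)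

/-- Euclidean norm on `ℝ²`. -/
def nrm2 (x : ℝ × ℝ) : ℝ := Real.sqrt (x.1 ^ 2 + x.2 ^ 2)

/-- Dot product on `ℝ²`. -/
def dot2 (x y : ℝ × ℝ) : ℝ := x.1 * y.1 + x.2 * y.2

/-- `x^⊥ = (x₂, -x₁)`. -/
def perp2 (x : ℝ × ℝ) : ℝ × ℝ := (x.2, -x.1)

/-- `δ_n` for `n ∈ ℤ²`. -/
def deltaInt (n : ℤ × ℤ) : ℂ := if n = 0 then 1 else 0

/-- `h(y,z) = Σ_{j ≥ 1} (1/(yj)) (ω(yj) − ω(|z|/(yj)))`. -/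
def hFun (ω : ℝ → ℝ) (y z : ℝ) : ℝ :=
  ∑' j : ℕ+, (1 / (y * ((j : ℕ) : ℝ))) *
    (ω (y * ((j : ℕ) : ℝ)) - ω (|z| / (y * ((j : ℕ) : ℝ))))

/-- `c = (∫_{ℝ²} ω(|x|) dx)⁻¹`. -/
def cConst (ω : ℝ → ℝ) : ℝ := (∫ x : ℝ × ℝ, ω (nrm2 x))⁻¹

/-- The function `p_{1,q}`. -/
def p1 (ω ω₀ : ℝ → ℝ) (Q : ℝ) (q : ℕ) (w : ℝ × ℝ) : ℂ :=
  -(cConst ω / Q : ℝ) * ∫ x : ℝ × ℝ,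
    (((ω₀ (nrm2 x / Q ^ ((3 : ℝ) / 2)) *
      ∑' j : ℕ+, (1 / ((q : ℝ) * ((j : ℕ) : ℝ)) ^ 2) *
        ω (nrm2 x / (((j : ℕ) : ℝ) * (q : ℝ) * Q ^ ((1 : ℝ) / 2)))) : ℝ) : ℂ) *
      e2pi (-(dot2 w x))

/-- The function `p_{2,r,k,q}` (with `q` allowed to be a real parameter). -/
def p2 (ω ω₀ : ℝ → ℝ) (Q : ℝ) (r : ℤ × ℤ) (k : ℕ) (q : ℝ) (w : ℝ × ℝ) : ℂ :=
  ((cConst ω / Q ^ 3 : ℝ) : ℂ) * ∫ x : ℝ × ℝ,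
    (((ω₀ (nrm2 x / Q ^ ((3 : ℝ) / 2)) *
      hFun ω ((k : ℝ) * q / Q) (((r.1 : ℝ) * x.1 + (r.2 : ℝ) * x.2) / Q ^ 2)) : ℝ) : ℂ) *
      e2pi (-(dot2 w x))

/-- The lattice `Λ(a,q) = {k a + q y}` as a subset of `ℤ²`. -/
def Lambda (a : ℤ × ℤ) (q : ℕ) : Set (ℤ × ℤ) :=
  {v | ∃ k : ℤ, ∃ y : ℤ × ℤ, v = (k * a.1 + (q : ℤ) * y.1, k * a.2 + (q : ℤ) * y.2)}

/-- `k(r) = gcd(r₁,r₂)/gcd(gcd(r₁,r₂),q)`. -/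
def kOf (r : ℤ × ℤ) (q : ℕ) : ℕ := Int.gcd r.1 r.2 / Nat.gcd (Int.gcd r.1 r.2) q

/-- The function `p_{Λ(a,q)}`. -/
def pLambda (ω ω₀ : ℝ → ℝ) (Q : ℝ) (q : ℕ) (a : ℤ × ℤ) (w : ℝ × ℝ) : ℂ :=
  p1 ω ω₀ Q q w +
    ∑' r : ℤ × ℤ,
      Set.indicator {r : ℤ × ℤ | r ∈ Lambda a q ∧ r ≠ 0}
        (fun r => ((ω (nrm2 ((r.1 : ℝ), (r.2 : ℝ)) / Q ^ ((1 : ℝ) / 2)) : ℝ) : ℂ) *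
          p2 ω ω₀ Q r (kOf r q) (q : ℝ) w) r

/-- Reduced residues `a mod q` (canonical representatives) with `gcd(a₁,a₂,q)=1`. -/
def residues (q : ℕ) : Finset (ℕ × ℕ) :=
  ((Finset.range q) ×ˢ (Finset.range q)).filter (fun a => Nat.gcd (Nat.gcd a.1 a.2) q = 1)

/-- Normalized directional derivative along `ξ`. -/
def dirDeriv (ξ : ℝ × ℝ) (f : ℝ × ℝ → ℂ) : ℝ × ℝ → ℂ :=
  fun w => fderiv ℝ f w (ξ.1 / nrm2 ξ, ξ.2 / nrm2 ξ)

/-- Fourier transform `ω̂₀(t) = ∫ ω₀(x) e(−xt) dx`. -/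
def fourierW0 (ω₀ : ℝ → ℝ) (t : ℝ) : ℂ := ∫ x : ℝ, ((ω₀ x : ℝ) : ℂ) * e2pi (-(x * t))

/-- `|M(w)x|` for the 3×2 matrix `M(w)`. -/
def Mnorm (Q : ℝ) (w : ℝ × ℝ) (x : ℝ × ℝ) : ℝ :=
  Real.sqrt (x.1 ^ 2 / Q + x.2 ^ 2 / Q + Q ^ 2 * (w.1 * x.2 - w.2 * x.1) ^ 2)

/-- `μ_{M(w)}(Λ(a,q))`: infimum of `|M(w)x|` over nonzero lattice points. -/
def muM (Q : ℝ) (w : ℝ × ℝ) (a : ℤ × ℤ) (q : ℕ) : ℝ :=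
  sInf {t : ℝ | ∃ v : ℤ × ℤ, v ∈ Lambda a q ∧ v ≠ 0 ∧ t = Mnorm Q w ((v.1 : ℝ), (v.2 : ℝ))}

/-- Quadratic form attached to an integer matrix, over any commutative ring. -/
def quadEval {s : ℕ} {R : Type*} [CommRing R] (M : Matrix (Fin s) (Fin s) ℤ)
    (x : Fin s → R) : R :=
  ∑ i, ∑ j, (M i j : R) * x i * x j

/-- `e_q(n) = exp(2πin/q)` for an integer `n`. -/
def eqc (q : ℕ) (n : ℤ) : ℂ := e2pi ((n : ℝ) / (q : ℝ))

/-- The exponential sum `D_q(u)`. -/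
def Dq (s : ℕ) (M₁ M₂ : Matrix (Fin s) (Fin s) ℤ) (q : ℕ) (u : Fin s → ℤ) : ℂ :=
  ∑ a ∈ residues q, ∑ b ∈ Fintype.piFinset (fun _ : Fin s => Finset.range q),
    eqc q ((a.1 : ℤ) * quadEval M₁ (fun i => (b i : ℤ)) +
      (a.2 : ℤ) * quadEval M₂ (fun i => (b i : ℤ)) + ∑ i, (b i : ℤ) * u i)

/-- The exponential sum `S_{q,dc}(u)`. -/
def Sq (s : ℕ) (M₁ M₂ : Matrix (Fin s) (Fin s) ℤ) (q d : ℕ) (c : ℤ × ℤ)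
    (u : Fin s → ℤ) : ℂ :=
  ∑ a ∈ (residues q).filter
      (fun a => (q : ℤ) ∣ (d : ℤ) * (c.1 * (a.2 : ℤ) - c.2 * (a.1 : ℤ))),
    ∑ b ∈ Fintype.piFinset (fun _ : Fin s => Finset.range q),
      eqc q ((a.1 : ℤ) * quadEval M₁ (fun i => (b i : ℤ)) +
        (a.2 : ℤ) * quadEval M₂ (fun i => (b i : ℤ)) + ∑ i, (b i : ℤ) * u i)

/-- The pair of quadratic forms given by `M₁, M₂` is nonsingular: at every nonzero
complex common zero the gradients (equivalently `M₁x`, `M₂x`) are linearly independent. -/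
def NonsingularPair (s : ℕ) (M₁ M₂ : Matrix (Fin s) (Fin s) ℤ) : Prop :=
  ∀ x : Fin s → ℂ, x ≠ 0 →
    quadEval M₁ x = 0 → quadEval M₂ x = 0 →
    LinearIndependent ℂ
      ![(M₁.map (fun z : ℤ => (z : ℂ))).mulVec x, (M₂.map (fun z : ℤ => (z : ℂ))).mulVec x]

/-- Euclidean norm on `Fin m → ℝ`. -/
def enorm' {m : ℕ} (v : Fin m → ℝ) : ℝ := Real.sqrt (∑ i, v i ^ 2)

end

/-!
Nonsingularity forbids corank two: if `a₁M₁ + a₂M₂` with `(a₁, a₂) ≠ 0` had a two-dimensional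
kernel, some nonzero vector of that kernel would be isotropic for the whole pencil, hence a
singular common zero. So the adjugate vanishes at no nonzero complex point of the pencil, and by
the Nullstellensatz over `ℤ` a fixed positive integer lies in the ideal of submaximal minors of
`a₁M₁ + a₂M₂` whenever `(a₁, a₂)` is unimodular, in any commutative ring.

*Singular series.* Squaring bounds the complete sum modulo `q` by the number of kernel vectors of
`a₁M₁ + a₂M₂`. By the previous paragraph this kernel is cyclic up to bounded index, so the sum is
`≪ q^{s/2} gcd(det (a₁M₁ + a₂M₂), q)^{1/2}`. Since `det (a₁M₁ + a₂M₂)` is a nonzero form in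
`(a₁, a₂)`, a fixed divisor `g` of `q` divides it for at most `≪ q² g^{-δ}` of the pairs: too many
roots in a short interval would make a nonzero Vandermonde determinant divisible by `g`. Hence
`|D_q(0)| ≪ q^{s/2 + 2} ∑_{g ∣ q} g^{1/2 - δ}`, and for `s ≥ 7` the series is dominated by a product
of two convergent Dirichlet series.

*Singular integral.* Put `M = α₁M₁ + α₂M₂`. Squaring gives `|J(α)|² ≤ ∫ |𝒜(h, M(2h))| dh` with the
ambiguity function `𝒜` of the weight, which decays rapidly in both variables. The integrand is
therefore small unless `h` and `Mh` are; replacing one row of `Mh` by a coordinate of `h` is a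
linear change of variables whose Jacobian is a submaximal minor of `M`, so
`|minor| * |J(α)|² ≪ 1`. The minors are forms of degree `s - 1` in `α` without common zero, whence
`|J(α)| ≪ (1 + |α|)^{-(s - 1)/2}`, which is integrable on the plane as soon as `s ≥ 6`.
-/

section SubmaximalMinors

variable {n : Type*} [Fintype n]

theorem exists_isotropic_mem_span_pair {K : Type*} [Field K] [IsAlgClosed K] [NeZero (2 : K)]
    {x y : n → K} (hxy : LinearIndependent K ![x, y]) (B : Matrix n n K) :
    ∃ z ∈ Submodule.span K {x, y}, z ≠ 0 ∧ z ⬝ᵥ B *ᵥ z = 0 := by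
  by_cases hy : y ⬝ᵥ B *ᵥ y = 0
  · exact ⟨y, Submodule.subset_span (by simp), hxy.ne_zero 1, hy⟩
  obtain ⟨r, hr⟩ := IsAlgClosed.exists_pow_nat_eq
    (discrim (y ⬝ᵥ B *ᵥ y) (x ⬝ᵥ B *ᵥ y + y ⬝ᵥ B *ᵥ x) (x ⬝ᵥ B *ᵥ x)) two_pos
  obtain ⟨t, ht⟩ := exists_quadratic_eq_zero hy ⟨r, by rw [← hr, sq]⟩
  refine ⟨x + t • y, Submodule.mem_span_pair.mpr ⟨1, t, by rw [one_smul]⟩, fun h => ?_, ?_⟩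
  · exact one_ne_zero (LinearIndependent.pair_iff.mp hxy 1 t (by rwa [one_smul])).1
  · simp only [mulVec_add, mulVec_smul, dotProduct_add, add_dotProduct, dotProduct_smul,
      smul_dotProduct, smul_eq_mul]
    linear_combination ht

variable [DecidableEq n]

theorem exists_linearIndependent_mulVec_eq_zero_of_adjugate_eq_zero {K : Type*} [Field K]
    [Nonempty n] {A : Matrix n n K} (hA : A.adjugate = 0) :
    ∃ x y : n → K, LinearIndependent K ![x, y] ∧ A *ᵥ x = 0 ∧ A *ᵥ y = 0 := by
  have hdet : A.det = 0 := by
    have i := Classical.arbitrary n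
    simpa [hA] using (congrFun₂ (mul_adjugate A) i i).symm
  obtain ⟨x, hx0, hx⟩ := exists_mulVec_eq_zero_iff.mpr hdet
  obtain ⟨w, hw0, hw⟩ := exists_vecMul_eq_zero_iff.mpr hdet
  obtain ⟨k, hxk⟩ : ∃ k, x k ≠ 0 := Function.ne_iff.mp hx0
  obtain ⟨l, hwl⟩ : ∃ l, w l ≠ 0 := Function.ne_iff.mp hw0
  have hminor : (A.updateRow l (Pi.single k 1)).det = 0 := by
    rw [← adjugate_apply, hA, Matrix.zero_apply]
  -- `A *ᵥ y` vanishes off row `l`, and pairing with the left kernel vector `w` kills row `l`.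
  obtain ⟨y, hy0, hy⟩ := exists_mulVec_eq_zero_iff.mpr hminor
  have hyk : y k = 0 := by
    simpa [mulVec, updateRow_self] using congrFun hy l
  have hAy_ne : ∀ i ≠ l, (A *ᵥ y) i = 0 := fun i hi => by
    simpa [mulVec, updateRow_ne hi] using congrFun hy i
  have hAy : A *ᵥ y = Pi.single l ((A *ᵥ y) l) := by
    funext i
    by_cases hi : i = l
    · rw [hi, Pi.single_eq_same]
    · rw [hAy_ne i hi, Pi.single_eq_of_ne hi]
  have hAyl : (A *ᵥ y) l = 0 := by
    have h : w ⬝ᵥ A *ᵥ y = 0 := by rw [dotProduct_mulVec, hw, zero_dotProduct]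
    rw [hAy, dotProduct_single] at h
    exact (mul_eq_zero.mp h).resolve_left hwl
  refine ⟨x, y, LinearIndependent.pair_iff.mpr fun a b hab => ?_, hx, by
    rw [hAy, hAyl, Pi.single_zero]⟩
  have ha : a = 0 := by simpa [hyk, hxk] using congrFun hab k
  exact ⟨ha, by simpa [ha, hy0] using hab⟩

theorem exists_isotropic_mulVec_eq_zero_of_adjugate_eq_zero {K : Type*} [Field K] [IsAlgClosed K]
    [NeZero (2 : K)] [Nonempty n] {A : Matrix n n K} (hA : A.adjugate = 0) (B : Matrix n n K) :
    ∃ z : n → K, z ≠ 0 ∧ A *ᵥ z = 0 ∧ z ⬝ᵥ B *ᵥ z = 0 := by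
  obtain ⟨x, y, hxy, hx, hy⟩ := exists_linearIndependent_mulVec_eq_zero_of_adjugate_eq_zero hA
  obtain ⟨z, hz, hz0, hBz⟩ := exists_isotropic_mem_span_pair hxy B
  obtain ⟨a, b, rfl⟩ := Submodule.mem_span_pair.mp hz
  exact ⟨_, hz0, by simp [mulVec_add, mulVec_smul, hx, hy], hBz⟩

/-- The ideal generated by the submaximal minors of a square matrix, that is, by the entries of
its adjugate. -/
def adjugateIdeal {R : Type*} [CommRing R] (A : Matrix n n R) : Ideal R :=
  Ideal.span (Set.range fun kl : n × n => A.adjugate kl.1 kl.2)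

theorem adjugate_mem_adjugateIdeal {R : Type*} [CommRing R] (A : Matrix n n R) (k l : n) :
    A.adjugate k l ∈ adjugateIdeal A :=
  Ideal.subset_span ⟨(k, l), rfl⟩

theorem adjugateIdeal_map {R S F : Type*} [CommRing R] [CommRing S] [FunLike F R S]
    [RingHomClass F R S] (f : F) (A : Matrix n n R) :
    (adjugateIdeal A).map f = adjugateIdeal (A.map f) := by
  have h := RingHom.map_adjugate (f : R →+* S) A
  rw [adjugateIdeal, adjugateIdeal, Ideal.map_span, ← Set.range_comp]
  congr 2
  funext kl
  exact congrFun₂ h kl.1 kl.2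

theorem adjugate_mul_apply_comm {R : Type*} [CommRing R] {A : Matrix n n R} {h : n → R}
    (hA : A *ᵥ h = 0) (k l j : n) : A.adjugate k l * h j = A.adjugate j l * h k := by
  set U := A.updateRow l (Pi.single k 1) with hU
  have hUh : U *ᵥ h = Pi.single l (h k) := by
    funext i
    by_cases hi : i = l
    · subst hi
      simp [hU, mulVec, updateRow_self]
    · simpa [hU, mulVec, updateRow_ne hi, hi] using congrFun hA i
  calc A.adjugate k l * h j
    _ = (U.adjugate *ᵥ (U *ᵥ h)) j := by
      rw [mulVec_mulVec, adjugate_mul, smul_mulVec, one_mulVec, adjugate_apply]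
      rfl
    _ = A.adjugate j l * h k := by
      rw [hUh, mulVec_single, hU, Pi.smul_apply, col_apply, adjugate_apply, updateRow_idem,
        ← adjugate_apply, op_smul_eq_mul]

theorem mul_apply_mul_apply_comm_of_mem_adjugateIdeal {R : Type*} [CommRing R] {A : Matrix n n R}
    {d m : R} {x y : n → R} (hd : d ∈ adjugateIdeal A) (hx : A *ᵥ (m • x) = 0)
    (hy : A *ᵥ (m • y) = 0) (i j : n) : d * (m * (x i * y j)) = d * (m * (x j * y i)) := by
  induction hd using Submodule.span_induction with
  | mem d hd =>
    obtain ⟨⟨k, l⟩, rfl⟩ := hd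
    have hxi := adjugate_mul_apply_comm hx k l i
    have hxj := adjugate_mul_apply_comm hx k l j
    have hyij := adjugate_mul_apply_comm hy i l j
    simp only [Pi.smul_apply, smul_eq_mul] at hxi hxj hyij
    linear_combination y j * hxi - y i * hxj + x k * hyij
  | zero => simp only [zero_mul]
  | add d e _ _ hd he => rw [add_mul, add_mul, hd, he]
  | smul c d _ hd => rw [smul_eq_mul, mul_assoc, hd, mul_assoc]

theorem smul_eq_smul_of_mem_adjugateIdeal {R : Type*} [CommRing R] {A : Matrix n n R} {d m : R}
    {u x y : n → R} (hd : d ∈ adjugateIdeal A) (hx : A *ᵥ (m • x) = 0) (hy : A *ᵥ (m • y) = 0)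
    (hu : u ⬝ᵥ (m • x) = m) : d • (m • y) = (d * (u ⬝ᵥ y)) • (m • x) := by
  funext j
  calc d * (m * y j)
    _ = ∑ i, u i * (d * (m * (x i * y j))) := by
      nth_rw 1 [← hu]
      simp only [dotProduct, Finset.sum_mul, Finset.mul_sum, Pi.smul_apply, smul_eq_mul]
      exact Finset.sum_congr rfl fun i _ => by ring
    _ = ∑ i, u i * (d * (m * (x j * y i))) := by
      simp only [mul_apply_mul_apply_comm_of_mem_adjugateIdeal hd hx hy _ j]
    _ = d * (u ⬝ᵥ y) * (m * x j) := by
      simp only [dotProduct, Finset.sum_mul, Finset.mul_sum]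
      exact Finset.sum_congr rfl fun i _ => by ring

end SubmaximalMinors

section IntegralNullstellensatz

open MvPolynomial

variable {σ : Type*} [Finite σ]

theorem exists_natCast_mul_pow_mem {I : Ideal (MvPolynomial σ ℤ)} {p : MvPolynomial σ ℤ}
    (hp : ∀ x : σ → ℂ, (∀ f ∈ I, aeval x f = 0) → aeval x p = 0) :
    ∃ D n : ℕ, 0 < D ∧ (D : MvPolynomial σ ℤ) * p ^ n ∈ I := by
  let _ : Algebra (MvPolynomial σ ℤ) (MvPolynomial σ ℚ) := algebraMvPolynomial
  have haeval (x : σ → ℂ) (f : MvPolynomial σ ℤ) :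
      aeval x (algebraMap (MvPolynomial σ ℤ) (MvPolynomial σ ℚ) f) = aeval x f :=
    aeval_map_algebraMap ℚ x f
  have hinj : Function.Injective (algebraMap (MvPolynomial σ ℤ) (MvPolynomial σ ℚ)) :=
    map_injective _ (RingHom.injective_int _)
  have hrad : algebraMap _ (MvPolynomial σ ℚ) p ∈ (I.map (algebraMap _ _)).radical := by
    rw [← vanishingIdeal_zeroLocus_eq_radical (K := ℂ)]
    refine fun x hx => (haeval x p).trans (hp x fun f hf => ?_)
    rw [← haeval]
    exact hx _ (Ideal.mem_map_of_mem _ hf)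
  obtain ⟨n, hn⟩ := hrad
  rw [← map_pow, IsLocalization.mem_map_algebraMap_iff
    ((nonZeroDivisors ℤ).map (C (σ := σ) (R := ℤ))) (MvPolynomial σ ℚ)] at hn
  obtain ⟨⟨⟨f, hf⟩, ⟨_, ⟨d, hd, rfl⟩⟩⟩, hfd⟩ := hn
  rw [← map_mul] at hfd
  have hmem : (d : MvPolynomial σ ℤ) * p ^ n ∈ I := by
    rw [mul_comm, ← eq_intCast C d, hinj hfd]
    exact hf
  refine ⟨d.natAbs, n, Int.natAbs_pos.mpr (nonZeroDivisors.ne_zero hd), ?_⟩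
  rcases Int.natAbs_eq d with h | h <;> rw [h] at hmem
  · simpa only [Int.cast_natCast] using hmem
  · simpa only [Int.cast_neg, Int.cast_natCast, neg_mul, neg_mem_iff] using hmem

theorem exists_natCast_mem_map_aeval {I : Ideal (MvPolynomial σ ℤ)}
    (hI : ∀ x : σ → ℂ, (∀ f ∈ I, aeval x f = 0) → x = 0) :
    ∃ D : ℕ, 0 < D ∧ ∀ (R : Type*) [CommRing R] (x : σ → R),
      Ideal.span (Set.range x) = ⊤ → (D : R) ∈ I.map (aeval x : MvPolynomial σ ℤ →ₐ[ℤ] R) := by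
  have := Fintype.ofFinite σ
  have hX (i : σ) := exists_natCast_mul_pow_mem (p := X i) fun x hx => by
    rw [hI x hx, aeval_X, Pi.zero_apply]
  choose D n hD hmem using hX
  refine ⟨∏ i, D i, Finset.prod_pos fun i _ => hD i, fun R _ x hx => ?_⟩
  refine Submodule.mem_of_span_eq_top_of_smul_pow_mem _ _ hx _ ?_
  rintro ⟨_, i, rfl⟩
  have hi : (D i : R) * x i ^ n i ∈ I.map (aeval x : MvPolynomial σ ℤ →ₐ[ℤ] R) := by
    simpa using Ideal.mem_map_of_mem (aeval x : MvPolynomial σ ℤ →ₐ[ℤ] R) (hmem i)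
  refine ⟨n i, ?_⟩
  obtain ⟨m, hm⟩ := Finset.dvd_prod_of_mem D (mem_univ i)
  rw [hm, Nat.cast_mul, smul_eq_mul, mul_left_comm, ← mul_assoc, mul_comm]
  exact Ideal.mul_mem_left _ _ hi

end IntegralNullstellensatz

section Pencil

open Polynomial

variable {s : ℕ} {R S : Type*} [CommRing R] [CommRing S] {M₁ M₂ : Matrix (Fin s) (Fin s) ℤ}

theorem quadEval_eq_dotProduct (M : Matrix (Fin s) (Fin s) ℤ) (x : Fin s → R) :
    quadEval M x = x ⬝ᵥ (M.map (Int.cast : ℤ → R)) *ᵥ x := by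
  simp only [quadEval, dotProduct, mulVec, map_apply, Finset.mul_sum]
  exact Finset.sum_congr rfl fun i _ => Finset.sum_congr rfl fun j _ => by ring

theorem map_quadEval (f : R →+* S) (M : Matrix (Fin s) (Fin s) ℤ) (x : Fin s → R) :
    f (quadEval M x) = quadEval M (f ∘ x) := by
  simp [quadEval]

/-- The member `a₁M₁ + a₂M₂`, with coefficients in a commutative ring, of the pencil of
quadratic forms spanned by two integer matrices. -/
def pencil (M₁ M₂ : Matrix (Fin s) (Fin s) ℤ) (a₁ a₂ : R) : Matrix (Fin s) (Fin s) R :=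
  a₁ • M₁.map (Int.cast : ℤ → R) + a₂ • M₂.map (Int.cast : ℤ → R)

theorem pencil_isSymm (hM₁ : M₁.IsSymm) (hM₂ : M₂.IsSymm) (a₁ a₂ : R) :
    (pencil M₁ M₂ a₁ a₂).IsSymm :=
  ((hM₁.map _).smul a₁).add ((hM₂.map _).smul a₂)

theorem pencil_map {F : Type*} [FunLike F R S] [RingHomClass F R S] (f : F) (a₁ a₂ : R) :
    (pencil M₁ M₂ a₁ a₂).map f = pencil M₁ M₂ (f a₁) (f a₂) := by
  ext i j
  simp [pencil]

theorem map_det_pencil (f : R →+* S) (a₁ a₂ : R) :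
    f (pencil M₁ M₂ a₁ a₂).det = (pencil M₁ M₂ (f a₁) (f a₂)).det := by
  rw [RingHom.map_det, RingHom.mapMatrix_apply, pencil_map]

theorem intCast_det_pencil (a₁ a₂ : ℤ) :
    ((pencil M₁ M₂ a₁ a₂).det : R) = (pencil M₁ M₂ (a₁ : R) (a₂ : R)).det :=
  map_det_pencil (Int.castRingHom R) a₁ a₂

theorem dotProduct_pencil_mulVec (a₁ a₂ : R) (x : Fin s → R) :
    x ⬝ᵥ pencil M₁ M₂ a₁ a₂ *ᵥ x = a₁ * quadEval M₁ x + a₂ * quadEval M₂ x := by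
  simp [pencil, quadEval_eq_dotProduct, add_mulVec, smul_mulVec]

theorem NonsingularPair.eq_zero_of_pencil_mulVec_eq_zero (hns : NonsingularPair s M₁ M₂)
    {a₁ a₂ : ℂ} (ha : IsCoprime a₁ a₂) {x : Fin s → ℂ} (hx : pencil M₁ M₂ a₁ a₂ *ᵥ x = 0)
    (h₁ : quadEval M₁ x = 0) (h₂ : quadEval M₂ x = 0) : x = 0 := by
  by_contra hx0
  obtain ⟨rfl, rfl⟩ := LinearIndependent.pair_iff.mp (hns x hx0 h₁ h₂) a₁ a₂ (by
    rw [← smul_mulVec, ← smul_mulVec, ← add_mulVec]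
    exact hx)
  exact not_isCoprime_zero_zero ha

theorem NonsingularPair.adjugate_pencil_ne_zero [NeZero s] (hns : NonsingularPair s M₁ M₂)
    {a₁ a₂ : ℂ} (ha : IsCoprime a₁ a₂) : (pencil M₁ M₂ a₁ a₂).adjugate ≠ 0 := by
  intro hadj
  obtain ⟨u, v, huv⟩ := id ha
  obtain ⟨z, hz0, hz, hBz⟩ :=
    exists_isotropic_mulVec_eq_zero_of_adjugate_eq_zero hadj (pencil M₁ M₂ (-v) u)
  have hAz : z ⬝ᵥ pencil M₁ M₂ a₁ a₂ *ᵥ z = 0 := by rw [hz, dotProduct_zero]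
  rw [dotProduct_pencil_mulVec] at hAz hBz
  refine hz0 (hns.eq_zero_of_pencil_mulVec_eq_zero ha hz ?_ ?_)
  · linear_combination u * hAz - a₂ * hBz - quadEval M₁ z * huv
  · linear_combination v * hAz + a₁ * hBz - quadEval M₂ z * huv

theorem dotProduct_map_derivative_mulVec_eq_zero {n : Type*} [Fintype n] {A : Matrix n n R[X]}
    (hA : A.IsSymm) {x : n → R[X]} (hx : A *ᵥ x = 0) : x ⬝ᵥ A.map derivative *ᵥ x = 0 := by
  have hderiv : A.map derivative *ᵥ x + A *ᵥ (derivative ∘ x) = 0 := by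
    funext i
    simpa [mulVec, dotProduct, Finset.sum_add_distrib] using congrArg derivative (congrFun hx i)
  have hxA : x ⬝ᵥ A *ᵥ (derivative ∘ x) = 0 := by
    rw [dotProduct_mulVec, ← mulVec_transpose, hA.eq, hx, zero_dotProduct]
  simpa [dotProduct_add, hxA] using congrArg (x ⬝ᵥ ·) hderiv

theorem NonsingularPair.det_pencil_one_X_ne_zero (hns : NonsingularPair s M₁ M₂)
    (hM₁ : M₁.IsSymm) (hM₂ : M₂.IsSymm) : (pencil M₁ M₂ (1 : ℂ[X]) X).det ≠ 0 := by
  intro hdet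
  obtain ⟨x, hx0, hx⟩ := exists_mulVec_eq_zero_iff.mpr hdet
  have hderiv : (pencil M₁ M₂ (1 : ℂ[X]) X).map derivative = pencil M₁ M₂ 0 1 := by
    ext1 i j
    simp [pencil]
  -- Differentiating `(M₁ + X • M₂) *ᵥ x = 0` makes every value of `x` a singular common zero.
  have h₂ : quadEval M₂ x = 0 := by
    have h := dotProduct_map_derivative_mulVec_eq_zero (pencil_isSymm hM₁ hM₂ 1 X) hx
    rwa [hderiv, dotProduct_pencil_mulVec, zero_mul, zero_add, one_mul] at h
  have h₁ : quadEval M₁ x = 0 := by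
    have h := dotProduct_pencil_mulVec (M₁ := M₁) (M₂ := M₂) 1 X x
    rwa [hx, dotProduct_zero, h₂, mul_zero, add_zero, one_mul, eq_comm] at h
  refine hx0 (funext fun k => Polynomial.funext fun t => ?_)
  have heval : pencil M₁ M₂ 1 t *ᵥ (evalRingHom t ∘ x) = 0 := by
    funext i
    have h := RingHom.map_mulVec (evalRingHom t) (pencil M₁ M₂ (1 : ℂ[X]) X) x i
    rw [hx, pencil_map, map_one, coe_evalRingHom, eval_X] at h
    simpa using h.symm
  have hzero : evalRingHom t ∘ x = 0 :=
    hns.eq_zero_of_pencil_mulVec_eq_zero isCoprime_one_left heval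
      (by rw [← map_quadEval, h₁, map_zero]) (by rw [← map_quadEval, h₂, map_zero])
  simpa using congrFun hzero k

theorem NonsingularPair.exists_det_pencil_one_natCast_ne_zero (hns : NonsingularPair s M₁ M₂)
    (hM₁ : M₁.IsSymm) (hM₂ : M₂.IsSymm) : ∃ t : ℕ, (pencil M₁ M₂ (1 : ℤ) t).det ≠ 0 := by
  by_contra! h
  refine hns.det_pencil_one_X_ne_zero hM₁ hM₂ (eq_zero_of_infinite_isRoot _
    ((Set.infinite_range_of_injective (Nat.cast_injective (R := ℂ))).mono ?_))
  rintro _ ⟨t, rfl⟩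
  have ht := map_det_pencil (M₁ := M₁) (M₂ := M₂) (Int.castRingHom ℂ) 1 t
  rw [h t, map_zero, map_one, map_natCast] at ht
  rw [Set.mem_ofPred_eq, IsRoot, ← coe_evalRingHom, map_det_pencil, map_one, coe_evalRingHom,
    eval_X, ht]

theorem map_aeval_adjugateIdeal_pencil_X (x : Fin 2 → R) :
    (adjugateIdeal (pencil M₁ M₂ (MvPolynomial.X 0) (MvPolynomial.X 1))).map
        (MvPolynomial.aeval x : MvPolynomial (Fin 2) ℤ →ₐ[ℤ] R) =
      adjugateIdeal (pencil M₁ M₂ (x 0) (x 1)) := by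
  rw [adjugateIdeal_map, pencil_map, MvPolynomial.aeval_X, MvPolynomial.aeval_X]

theorem NonsingularPair.exists_natCast_mem_adjugateIdeal [NeZero s]
    (hns : NonsingularPair s M₁ M₂) :
    ∃ D : ℕ, 0 < D ∧ ∀ (R : Type*) [CommRing R] (a₁ a₂ : R), IsCoprime a₁ a₂ →
      (D : R) ∈ adjugateIdeal (pencil M₁ M₂ a₁ a₂) := by
  have hzero (x : Fin 2 → ℂ) (hx : ∀ f ∈ adjugateIdeal (pencil M₁ M₂
      (MvPolynomial.X 0 : MvPolynomial (Fin 2) ℤ) (MvPolynomial.X 1)),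
      MvPolynomial.aeval x f = 0) : x = 0 := by
    by_contra hx0
    have hcop : IsCoprime (x 0) (x 1) := by
      by_cases h0 : x 0 = 0
      · have h1 : x 1 ≠ 0 := fun h1 => hx0 (by
          funext i
          fin_cases i
          exacts [h0, h1])
        exact ⟨0, (x 1)⁻¹, by simp [h1]⟩
      · exact ⟨(x 0)⁻¹, 0, by simp [h0]⟩
    have hbot : adjugateIdeal (pencil M₁ M₂ (x 0) (x 1)) ≤ ⊥ := by
      rw [← map_aeval_adjugateIdeal_pencil_X]
      exact Ideal.map_le_iff_le_comap.mpr hx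
    exact hns.adjugate_pencil_ne_zero hcop
      (Matrix.ext fun k l => hbot (adjugate_mem_adjugateIdeal _ k l))
  obtain ⟨D, hD, hmem⟩ := exists_natCast_mem_map_aeval hzero
  refine ⟨D, hD, fun R _ a₁ a₂ ha => ?_⟩
  have hspan : Ideal.span (Set.range ![a₁, a₂]) = ⊤ := by
    rw [range_cons, range_cons_empty, Ideal.eq_top_iff_one]
    exact Ideal.mem_span_pair.mpr ha
  have h := hmem R ![a₁, a₂] hspan
  rwa [map_aeval_adjugateIdeal_pencil_X] at h

end Pencil

section KernelCounting

theorem mem_zmultiples_of_addOrderOf_nsmul_eq_zero {G : Type*} [AddCommGroup G] [IsAddCyclic G]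
    [Finite G] {x y : G} (h : addOrderOf x • y = 0) : y ∈ AddSubgroup.zmultiples x := by
  classical
  have := Fintype.ofFinite G
  have hsub : (AddSubgroup.zmultiples x : Set G).toFinset ⊆
      univ.filter fun z => addOrderOf x • z = 0 := fun z hz => by
    obtain ⟨k, rfl⟩ := AddSubgroup.mem_zmultiples_iff.mp (Set.mem_toFinset.mp hz)
    rw [mem_filter_univ, smul_comm, addOrderOf_nsmul_eq_zero, smul_zero]
  have hcard : #(AddSubgroup.zmultiples x : Set G).toFinset = addOrderOf x := by
    rw [Set.toFinset_card, ← Nat.card_eq_fintype_card]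
    exact Nat.card_zmultiples x
  have heq := eq_of_subset_of_card_le hsub
    ((IsAddCyclic.card_nsmul_eq_zero_le (addOrderOf_pos x)).trans hcard.ge)
  exact Set.mem_toFinset.mp (heq ▸ (mem_filter_univ y).mpr h)

theorem exists_dotProduct_dvd_of_addOrderOf_nsmul_eq_zero {ι : Type*} [Fintype ι]
    {q : ℕ} [NeZero q] (h : ι → ZMod q) :
    ∃ u : ι → ZMod q, ∀ x : ZMod q, addOrderOf h • x = 0 → u ⬝ᵥ h ∣ x := by
  have : IsPrincipalIdealRing (ZMod q) :=
    .of_surjective (Int.castRingHom (ZMod q)) (ZMod.ringHom_surjective _)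
  obtain ⟨m, hm : _ = Ideal.span {m}⟩ := IsPrincipalIdealRing.principal (Ideal.span (Set.range h))
  obtain ⟨u, hu⟩ : ∃ u : ι → ZMod q, u ⬝ᵥ h = m :=
    Ideal.mem_span_range_iff_exists_fun.mp (by rw [hm]; exact Ideal.mem_span_singleton_self m)
  have hmh (i : ι) : m ∣ h i := by
    rw [← Ideal.mem_span_singleton, ← hm]
    exact Ideal.subset_span (Set.mem_range_self i)
  have horder : addOrderOf m = addOrderOf h := by
    refine Nat.dvd_antisymm ?_ ?_ <;> rw [addOrderOf_dvd_iff_nsmul_eq_zero]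
    · rw [← hu, ← dotProduct_smul, addOrderOf_nsmul_eq_zero, dotProduct_zero]
    · funext i
      obtain ⟨k, hk⟩ := hmh i
      rw [Pi.smul_apply, hk, ← smul_mul_assoc, addOrderOf_nsmul_eq_zero, zero_mul, Pi.zero_apply]
  refine ⟨u, fun x hx => ?_⟩
  obtain ⟨k, rfl⟩ := AddSubgroup.mem_zmultiples_iff.mp
    (mem_zmultiples_of_addOrderOf_nsmul_eq_zero (horder ▸ hx))
  exact hu ▸ ⟨k, by rw [zsmul_eq_mul, mul_comm]⟩

variable {ι : Type*} [Fintype ι] [DecidableEq ι]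

theorem card_nsmul_eq_le {G : Type*} [AddCommGroup G] [IsAddCyclic G] [Fintype G] [DecidableEq G]
    {D : ℕ} (hD : 0 < D) (v : ι → G) : #{x : ι → G | D • x = v} ≤ D ^ Fintype.card ι := by
  have hfiber (g : G) : #{z : G | D • z = g} ≤ D := by
    obtain h | ⟨z₀, hz₀⟩ := (univ.filter fun z : G => D • z = g).eq_empty_or_nonempty
    · simp [h]
    refine (Finset.card_le_card_of_injOn (· - z₀) (fun z hz => ?_)
      sub_left_injective.injOn).trans (IsAddCyclic.card_nsmul_eq_zero_le hD)
    simp only [coe_filter, mem_filter_univ, mem_univ, true_and, Set.mem_ofPred_eq] at hz hz₀ ⊢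
    rw [smul_sub, hz, hz₀, sub_self]
  have hpi : (univ.filter fun x : ι → G => D • x = v) =
      Fintype.piFinset fun i => univ.filter fun z : G => D • z = v i := by
    ext x
    simp [funext_iff]
  rw [hpi, Fintype.card_piFinset, ← card_univ]
  exact Finset.prod_le_pow_card _ _ D fun i _ => hfiber (v i)

theorem card_le_pow_mul_card_of_nsmul_mem {ι G : Type*} [Fintype ι] [AddCommGroup G]
    [IsAddCyclic G] [Finite G] {D : ℕ} (hD : 0 < D) {S T : Finset (ι → G)}
    (hST : ∀ x ∈ S, D • x ∈ T) : #S ≤ D ^ Fintype.card ι * #T := by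
  classical
  have := Fintype.ofFinite G
  exact Finset.card_le_mul_card_image_of_maps_to hST _ fun v _ =>
    (card_le_card (filter_subset_filter _ (subset_univ S))).trans (card_nsmul_eq_le hD v)

theorem exists_forall_nsmul_mem_zmultiples_of_mulVec_eq_zero {q : ℕ} [NeZero q]
    {A : Matrix ι ι (ZMod q)} {D : ℕ} (hmem : (D : ZMod q) ∈ adjugateIdeal A) :
    ∃ h₀, A *ᵥ h₀ = 0 ∧ ∀ h, A *ᵥ h = 0 → D • h ∈ AddSubgroup.zmultiples h₀ := by
  let K : AddSubgroup (ι → ZMod q) := (LinearMap.ker A.mulVecLin).toAddSubgroup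
  obtain ⟨⟨h₀, hh₀⟩, hexp⟩ :=
    AddMonoid.exists_addOrderOf_eq_exponent (G := K) AddMonoid.ExponentExists.of_finite
  rw [AddSubgroup.addOrderOf_mk] at hexp
  have hK (h : ι → ZMod q) (hh : h ∈ K) : addOrderOf h₀ • h = 0 := by
    rw [hexp]
    exact congrArg Subtype.val (AddMonoid.exponent_nsmul_eq_zero (⟨h, hh⟩ : K))
  -- As `h₀` has maximal order, its content `u ⬝ᵥ h₀` divides every vector of the kernel.
  obtain ⟨u, hu⟩ := exists_dotProduct_dvd_of_addOrderOf_nsmul_eq_zero h₀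
  have hsmul (h : ι → ZMod q) (hh : h ∈ K) : ∃ k, h = (u ⬝ᵥ h₀) • k := by
    choose k hk using fun i => hu (h i) (congrFun (hK h hh) i)
    exact ⟨k, funext hk⟩
  refine ⟨h₀, hh₀, fun h hh => ?_⟩
  obtain ⟨k₀, hk₀⟩ := hsmul h₀ hh₀
  obtain ⟨k, hk⟩ := hsmul h hh
  have key := smul_eq_smul_of_mem_adjugateIdeal hmem (hk₀ ▸ hh₀) (hk ▸ hh)
    (congrArg (u ⬝ᵥ ·) hk₀).symm
  rw [← hk₀, ← hk, Nat.cast_smul_eq_nsmul] at key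
  obtain ⟨c, hc⟩ := ZMod.intCast_surjective ((D : ZMod q) * (u ⬝ᵥ k))
  exact AddSubgroup.mem_zmultiples_iff.mpr ⟨c, by rw [key, ← hc, Int.cast_smul_eq_zsmul]⟩

theorem addOrderOf_dvd_gcd_of_mulVec_eq_zero {q : ℕ} {A : Matrix ι ι (ZMod q)} {δ : ℤ}
    (hδ : A.det = δ) {h : ι → ZMod q} (hh : A *ᵥ h = 0) : addOrderOf h ∣ Int.gcd δ q := by
  have hdet : A.det • h = 0 := by
    rw [← one_mulVec h, ← smul_mulVec, ← adjugate_mul, ← mulVec_mulVec, hh, mulVec_zero]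
  rw [← Int.natCast_dvd_natCast, Int.dvd_coe_gcd_iff, addOrderOf_dvd_iff_zsmul_eq_zero,
    addOrderOf_dvd_iff_zsmul_eq_zero]
  constructor
  · rw [← Int.cast_smul_eq_zsmul (ZMod q), ← hδ, hdet]
  · rw [← Int.cast_smul_eq_zsmul (ZMod q), Int.cast_natCast, ZMod.natCast_self, zero_smul]

theorem card_mulVec_eq_zero_le {q : ℕ} [NeZero q] {A : Matrix ι ι (ZMod q)} {δ : ℤ}
    (hδ : A.det = δ) {D : ℕ} (hD : 0 < D) (hmem : (D : ZMod q) ∈ adjugateIdeal A) :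
    #{h : ι → ZMod q | A *ᵥ h = 0} ≤ D ^ Fintype.card ι * Int.gcd δ q := by
  classical
  obtain ⟨h₀, hh₀, hcyclic⟩ := exists_forall_nsmul_mem_zmultiples_of_mulVec_eq_zero hmem
  have hgcd : addOrderOf h₀ ≤ Int.gcd δ q :=
    Nat.le_of_dvd (Int.gcd_pos_of_ne_zero_right δ (mod_cast NeZero.ne q))
      (addOrderOf_dvd_gcd_of_mulVec_eq_zero hδ hh₀)
  refine (card_le_pow_mul_card_of_nsmul_mem hD
    (T := (AddSubgroup.zmultiples h₀ : Set (ι → ZMod q)).toFinset)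
    fun h hh => Set.mem_toFinset.mpr (hcyclic h ((mem_filter_univ h).mp hh))).trans ?_
  gcongr
  rw [Set.toFinset_card, ← Nat.card_eq_fintype_card]
  exact (Nat.card_zmultiples h₀).trans_le hgcd

end KernelCounting

section ExponentialSums

theorem sum_addChar_dotProduct_eq_zero {ι R R' : Type*} [Fintype ι] [DecidableEq ι] [CommRing R]
    [Fintype R] [CommRing R'] [IsDomain R'] [CharZero R'] {ψ : AddChar R R'} (hψ : ψ.IsPrimitive)
    {v : ι → R} (hv : v ≠ 0) : ∑ b : ι → R, ψ (v ⬝ᵥ b) = 0 := by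
  let L : (ι → R) →+ R := ⟨⟨(v ⬝ᵥ ·), dotProduct_zero v⟩, dotProduct_add v⟩
  change ∑ b, ψ.compAddMonoidHom L b = 0
  refine AddChar.sum_eq_zero_iff_ne_zero.mpr fun h => ?_
  obtain ⟨i, hi⟩ := Function.ne_iff.mp hv
  refine hψ hi (DFunLike.ext _ _ fun t => ?_)
  simpa [L] using DFunLike.congr_fun h (Pi.single i t)

theorem dotProduct_mulVec_add_self {ι R : Type*} [Fintype ι] [CommRing R] {A : Matrix ι ι R}
    (hA : A.IsSymm) (x h : ι → R) :
    (x + h) ⬝ᵥ A *ᵥ (x + h) = x ⬝ᵥ A *ᵥ x + h ⬝ᵥ A *ᵥ h + (A *ᵥ (2 • h)) ⬝ᵥ x := by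
  have hsymm : h ⬝ᵥ A *ᵥ x = (A *ᵥ h) ⬝ᵥ x := by
    rw [dotProduct_mulVec, ← mulVec_transpose, hA.eq]
  rw [mulVec_smul, smul_dotProduct, two_nsmul, mulVec_add, dotProduct_add, add_dotProduct,
    add_dotProduct, hsymm, dotProduct_comm x (A *ᵥ h)]
  ring

theorem norm_sum_addChar_quadratic_sq_le {ι R : Type*} [Fintype ι] [DecidableEq ι] [CommRing R]
    [Fintype R] [DecidableEq R] {ψ : AddChar R ℂ} (hψ : ψ.IsPrimitive) {A : Matrix ι ι R}
    (hA : A.IsSymm) :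
    ‖∑ b, ψ (b ⬝ᵥ A *ᵥ b)‖ ^ 2 ≤
      (Fintype.card R : ℝ) ^ Fintype.card ι * #{h : ι → R | A *ᵥ (2 • h) = 0} := by
  have hdiff (b h : ι → R) : ψ ((b + h) ⬝ᵥ A *ᵥ (b + h)) * starRingEnd ℂ (ψ (b ⬝ᵥ A *ᵥ b)) =
      ψ (h ⬝ᵥ A *ᵥ h) * ψ ((A *ᵥ (2 • h)) ⬝ᵥ b) := by
    rw [← AddChar.map_neg_eq_conj, ← AddChar.map_add_eq_mul, ← AddChar.map_add_eq_mul,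
      dotProduct_mulVec_add_self hA]
    congr 1
    ring
  have hsq : (‖∑ b, ψ (b ⬝ᵥ A *ᵥ b)‖ ^ 2 : ℂ) =
      ∑ h, ψ (h ⬝ᵥ A *ᵥ h) * ∑ b, ψ ((A *ᵥ (2 • h)) ⬝ᵥ b) := by
    simp only [Finset.mul_sum, ← hdiff]
    rw [← Complex.mul_conj', map_sum, Finset.mul_sum, Finset.sum_comm]
    refine Finset.sum_congr rfl fun b _ => ?_
    rw [Finset.sum_mul]
    exact (Equiv.sum_comp (Equiv.addLeft b) fun x =>
      ψ (x ⬝ᵥ A *ᵥ x) * starRingEnd ℂ (ψ (b ⬝ᵥ A *ᵥ b))).symm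
  have hinner (h : ι → R) : ‖ψ (h ⬝ᵥ A *ᵥ h) * ∑ b, ψ ((A *ᵥ (2 • h)) ⬝ᵥ b)‖ =
      if A *ᵥ (2 • h) = 0 then (Fintype.card R : ℝ) ^ Fintype.card ι else 0 := by
    rw [norm_mul, AddChar.norm_apply, one_mul]
    split_ifs with hh
    · simp only [hh, zero_dotProduct]
      simp
    · rw [sum_addChar_dotProduct_eq_zero hψ hh, norm_zero]
  calc ‖∑ b, ψ (b ⬝ᵥ A *ᵥ b)‖ ^ 2
    _ = ‖(‖∑ b, ψ (b ⬝ᵥ A *ᵥ b)‖ ^ 2 : ℂ)‖ := by simp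
    _ ≤ ∑ h, ‖ψ (h ⬝ᵥ A *ᵥ h) * ∑ b, ψ ((A *ᵥ (2 • h)) ⬝ᵥ b)‖ := hsq ▸ norm_sum_le _ _
    _ = _ := by
      simp only [hinner]
      rw [← Finset.sum_filter, Finset.sum_const, nsmul_eq_mul, mul_comm]

theorem eqc_eq_stdAddChar {q : ℕ} [NeZero q] (n : ℤ) : eqc q n = ZMod.stdAddChar (n : ZMod q) := by
  rw [ZMod.stdAddChar_coe, eqc, e2pi]
  congr 1
  push_cast
  ring

theorem sum_piFinset_range_natCast {q : ℕ} [NeZero q] {ι E : Type*} [Fintype ι] [DecidableEq ι]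
    [AddCommMonoid E] (f : (ι → ZMod q) → E) :
    ∑ b ∈ Fintype.piFinset (fun _ : ι => Finset.range q), f (fun i => (b i : ZMod q)) =
      ∑ b : ι → ZMod q, f b := by
  refine Finset.sum_bij' (fun b _ i => (b i : ZMod q)) (fun b _ i => (b i).val)
    (fun _ _ => mem_univ _) (fun b _ => ?_) (fun b hb => funext fun i => ?_)
    (fun b _ => funext fun i => ZMod.natCast_zmod_val (b i)) (fun _ _ => rfl)
  · exact Fintype.mem_piFinset.mpr fun i => Finset.mem_range.mpr (ZMod.val_lt (b i))
  · exact ZMod.val_cast_of_lt (Finset.mem_range.mp (Fintype.mem_piFinset.mp hb i))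

theorem isCoprime_of_mem_residues {q : ℕ} {a : ℕ × ℕ} (ha : a ∈ residues q) :
    IsCoprime (a.1 : ZMod q) (a.2 : ZMod q) := by
  obtain ⟨u, v, huv⟩ : IsCoprime ((Nat.gcd a.1 a.2 : ℕ) : ℤ) (q : ℤ) :=
    Nat.isCoprime_iff_coprime.mpr (mem_filter.mp ha).2
  refine ⟨u * Nat.gcdA a.1 a.2, u * Nat.gcdB a.1 a.2, ?_⟩
  have h := congrArg (Int.cast : ℤ → ZMod q) huv
  rw [Nat.gcd_eq_gcd_ab] at h
  push_cast at h
  rw [ZMod.natCast_self] at h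
  linear_combination h

variable {s : ℕ} {M₁ M₂ : Matrix (Fin s) (Fin s) ℤ}

theorem Dq_zero_eq (q : ℕ) [NeZero q] :
    Dq s M₁ M₂ q 0 = ∑ a ∈ residues q, ∑ b : Fin s → ZMod q,
      ZMod.stdAddChar (b ⬝ᵥ pencil M₁ M₂ (a.1 : ZMod q) (a.2 : ZMod q) *ᵥ b) := by
  refine Finset.sum_congr rfl fun a _ => ?_
  rw [← sum_piFinset_range_natCast]
  refine Finset.sum_congr rfl fun b _ => ?_
  rw [eqc_eq_stdAddChar, dotProduct_pencil_mulVec]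
  congr 1
  simp [quadEval]

theorem NonsingularPair.exists_norm_sum_stdAddChar_pencil_le [NeZero s]
    (hns : NonsingularPair s M₁ M₂) (hM₁ : M₁.IsSymm) (hM₂ : M₂.IsSymm) :
    ∃ C : ℝ, 0 ≤ C ∧ ∀ (q : ℕ) [NeZero q], ∀ a ∈ residues q,
      ‖∑ b : Fin s → ZMod q,
          ZMod.stdAddChar (b ⬝ᵥ pencil M₁ M₂ (a.1 : ZMod q) (a.2 : ZMod q) *ᵥ b)‖ ≤
        C * √((q : ℝ) ^ s) * √(Int.gcd (pencil M₁ M₂ (a.1 : ℤ) a.2).det q) := by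
  obtain ⟨D, hD, hmem⟩ := hns.exists_natCast_mem_adjugateIdeal
  refine ⟨√((2 * D) ^ s), by positivity, fun q _ a ha => ?_⟩
  have hdet : (pencil M₁ M₂ (a.1 : ZMod q) (a.2 : ZMod q)).det =
      ((pencil M₁ M₂ (a.1 : ℤ) a.2).det : ZMod q) := by
    simp [intCast_det_pencil]
  have hker := card_mulVec_eq_zero_le hdet hD (hmem _ _ _ (isCoprime_of_mem_residues ha))
  have hdouble := card_le_pow_mul_card_of_nsmul_mem two_pos
    (S := {h : Fin s → ZMod q | pencil M₁ M₂ (a.1 : ZMod q) (a.2 : ZMod q) *ᵥ (2 • h) = 0})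
    (T := {h : Fin s → ZMod q | pencil M₁ M₂ (a.1 : ZMod q) (a.2 : ZMod q) *ᵥ h = 0})
    (fun h hh => by simpa using hh)
  have hweyl := norm_sum_addChar_quadratic_sq_le (ZMod.isPrimitive_stdAddChar q)
    (pencil_isSymm hM₁ hM₂ (a.1 : ZMod q) (a.2 : ZMod q))
  rw [ZMod.card, Fintype.card_fin] at hweyl
  rw [Fintype.card_fin] at hker hdouble
  rw [← Real.sqrt_mul (by positivity), ← Real.sqrt_mul (by positivity)]
  refine Real.le_sqrt_of_sq_le (hweyl.trans ?_)
  calc (q : ℝ) ^ s * _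
    _ ≤ (q : ℝ) ^ s * (2 ^ s * (D ^ s * Int.gcd (pencil M₁ M₂ (a.1 : ℤ) a.2).det q)) := by
      gcongr
      exact_mod_cast hdouble.trans (Nat.mul_le_mul_left _ hker)
    _ = _ := by ring

end ExponentialSums

section RootCounting

open Polynomial

theorem dvd_coeff_mul_det_vandermonde {R : Type*} [CommRing R] {n : ℕ} {f : R[X]}
    (hf : f.natDegree ≤ n) {g : R} {t : Fin (n + 1) → R} (ht : ∀ i, g ∣ f.eval (t i)) :
    g ∣ f.coeff n * (vandermonde t).det := by
  have heval : vandermonde t *ᵥ (fun j => f.coeff j) = fun i => f.eval (t i) := by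
    funext i
    rw [eval_eq_sum_range' (Nat.lt_succ_of_le hf), Finset.sum_range]
    simp only [mulVec, dotProduct, vandermonde_apply, mul_comm]
  have hadj : ((vandermonde t).adjugate *ᵥ fun i => f.eval (t i)) (Fin.last n) =
      f.coeff n * (vandermonde t).det := by
    rw [← heval, mulVec_mulVec, adjugate_mul, smul_mulVec, one_mulVec, Pi.smul_apply,
      Fin.val_last, smul_eq_mul, mul_comm]
  rw [← hadj]
  simp only [mulVec, dotProduct]
  exact Finset.dvd_sum fun i _ => (ht i).mul_left _

theorem abs_det_vandermonde_le {R : Type*} [CommRing R] [LinearOrder R] [IsStrictOrderedRing R]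
    {n : ℕ} {t : Fin n → R} {L : R} (hL : 1 ≤ L) (ht : ∀ i j, |t j - t i| ≤ L) :
    |(vandermonde t).det| ≤ L ^ (n ^ 2) := by
  rw [det_vandermonde, Finset.abs_prod]
  calc ∏ i, |∏ j ∈ Finset.Ioi i, (t j - t i)|
    _ ≤ ∏ _i : Fin n, L ^ n := by
      refine Finset.prod_le_prod (fun _ _ => abs_nonneg _) fun i _ => ?_
      rw [Finset.abs_prod]
      refine (Finset.prod_le_prod (fun _ _ => abs_nonneg _) fun j _ => ht i j).trans ?_
      rw [Finset.prod_const]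
      exact pow_le_pow_right₀ hL ((card_le_univ _).trans (Fintype.card_fin n).le)
    _ = L ^ (n ^ 2) := by simp [← pow_mul, sq]

theorem card_le_of_dvd_eval {n : ℕ} {f : ℤ[X]} (hf : f.natDegree ≤ n) (hn : f.coeff n ≠ 0)
    {g L : ℤ} (hL : 1 ≤ L) (hgL : |f.coeff n| * L ^ ((n + 1) ^ 2) < g) {S : Finset ℤ}
    (hS : ∀ t ∈ S, g ∣ f.eval t) (hdiam : ∀ t ∈ S, ∀ u ∈ S, |u - t| ≤ L) : #S ≤ n := by
  by_contra! hcard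
  let t := S.orderEmbOfCardLe (k := n + 1) hcard
  have ht (i) : t i ∈ S := S.orderEmbOfCardLe_mem hcard i
  have hdet : (vandermonde t).det ≠ 0 := det_vandermonde_ne_zero_iff.mpr t.injective
  refine (Int.le_of_dvd (abs_pos.mpr (mul_ne_zero hn hdet))
    ((dvd_abs _ _).mpr (dvd_coeff_mul_det_vandermonde hf fun i => hS _ (ht i)))).not_gt ?_
  rw [abs_mul]
  exact (mul_le_mul_of_nonneg_left (abs_det_vandermonde_le hL fun i j => hdiam _ (ht i) _ (ht j))
    (abs_nonneg _)).trans_lt hgL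

theorem card_dvd_eval_range_le {n : ℕ} {f : ℤ[X]} (hf : f.natDegree ≤ n) (hn : f.coeff n ≠ 0)
    {g : ℤ} {L : ℕ} (hL : 0 < L) (hgL : |f.coeff n| * (L : ℤ) ^ ((n + 1) ^ 2) < g) (q : ℕ) :
    #{t ∈ Finset.range q | g ∣ f.eval (Nat.cast t)} ≤ n * (q / L + 1) := by
  have hmaps : ∀ t ∈ ({t ∈ Finset.range q | g ∣ f.eval (Nat.cast t)} : Finset ℕ),
      t / L ∈ Finset.range (q / L + 1) := fun t ht =>
    Finset.mem_range.mpr (Nat.lt_succ_of_le (Nat.div_le_div_right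
      (Finset.mem_range.mp (mem_filter.mp ht).1).le))
  refine (Finset.card_le_mul_card_image_of_maps_to hmaps n fun k _ => ?_).trans_eq
    (by rw [card_range])
  rw [← Finset.card_map (Nat.castEmbedding (R := ℤ))]
  refine card_le_of_dvd_eval hf hn (Int.toNat_le.mp hL) hgL ?_ ?_ <;>
    simp only [Finset.forall_mem_map, mem_filter, Nat.castEmbedding_apply]
  · exact fun t ht => ht.1.2
  · intro t ht u hu
    have htk := Nat.div_add_mod t L
    have huk := Nat.div_add_mod u L
    rw [ht.2] at htk
    rw [hu.2] at huk
    have htL := Nat.mod_lt t hL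
    have huL := Nat.mod_lt u hL
    rw [abs_le]
    constructor <;> omega

theorem card_dvd_eval_range_le_div {n : ℕ} {f : ℤ[X]} (hf : f.natDegree ≤ n)
    (hn : f.coeff n ≠ 0) {g : ℤ} {y : ℝ} (hy : 0 < y)
    (hgy : (|f.coeff n| : ℤ) * y ^ ((n + 1) ^ 2) < (g : ℝ)) {q : ℕ} (hyq : y ≤ q) :
    (#{t ∈ Finset.range q | g ∣ f.eval (Nat.cast t)} : ℝ) ≤ (3 * n + 1) * (q / y) := by
  have hqy : 1 ≤ q / y := (one_le_div hy).mpr hyq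
  rcases Nat.eq_zero_or_pos ⌊y⌋₊ with hL | hL
  · have hcard : (#{t ∈ Finset.range q | g ∣ f.eval (Nat.cast t)} : ℝ) ≤ q := by
      exact_mod_cast (card_filter_le _ _).trans (card_range q).le
    have hy1 : (q : ℝ) ≤ q / y :=
      le_div_self (Nat.cast_nonneg q) hy (Nat.floor_eq_zero.mp hL).le
    have : 0 ≤ n * (q / y) := by positivity
    linarith
  · have hLy : (⌊y⌋₊ : ℝ) ≤ y := Nat.floor_le hy.le
    have hL1 : (1 : ℝ) ≤ ⌊y⌋₊ := by exact_mod_cast hL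
    have hgL : |f.coeff n| * (⌊y⌋₊ : ℤ) ^ ((n + 1) ^ 2) < g := by
      rw [← Int.cast_lt (R := ℝ)]
      refine lt_of_le_of_lt ?_ hgy
      push_cast
      gcongr
    have hcard : (#{t ∈ Finset.range q | g ∣ f.eval (Nat.cast t)} : ℝ) ≤
        n * ((q / ⌊y⌋₊ : ℕ) + 1) := by
      exact_mod_cast card_dvd_eval_range_le hf hn hL hgL q
    have hdiv : ((q / ⌊y⌋₊ : ℕ) : ℝ) ≤ 2 * (q / y) := by
      refine Nat.cast_div_le.trans ?_
      rw [← mul_div_assoc, div_le_div_iff₀ (by linarith) hy]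
      nlinarith [Nat.lt_floor_add_one y, Nat.cast_nonneg (α := ℝ) q]
    nlinarith [Nat.cast_nonneg (α := ℝ) n]

theorem exists_card_dvd_eval_range_le (n : ℕ) {l : ℤ} (hl : l ≠ 0) :
    ∃ C δ : ℝ, 0 ≤ C ∧ 0 < δ ∧ ∀ f : ℤ[X], f.natDegree ≤ n → f.coeff n = l →
      ∀ g q : ℕ, 0 < g → g ≤ q →
        (#{t ∈ Finset.range q | (g : ℤ) ∣ f.eval (Nat.cast t)} : ℝ) ≤ C * q * (g : ℝ) ^ (-δ) := by
  set E : ℕ := (n + 1) ^ 2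
  have hE : E ≠ 0 := by positivity
  set a : ℝ := 2 * (|l| : ℤ)
  have hl1 : (1 : ℝ) ≤ (|l| : ℤ) := by exact_mod_cast Int.one_le_abs hl
  have ha : 0 < a := by positivity
  refine ⟨(3 * n + 1) * a ^ (E : ℝ)⁻¹, (E : ℝ)⁻¹, by positivity, by positivity, ?_⟩
  rintro f hf rfl g q hg hgq
  have hg0 : (0 : ℝ) < g := by exact_mod_cast hg
  have hgq' : (g : ℝ) ≤ q := by exact_mod_cast hgq
  have hq1 : (1 : ℝ) ≤ q := by exact_mod_cast hg.trans_le hgq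
  set y : ℝ := (g / a) ^ (E : ℝ)⁻¹ with hy
  have hyE : y ^ E = g / a := Real.rpow_inv_natCast_pow (by positivity) hE
  have hgy : (|f.coeff n| : ℤ) * y ^ E < (g : ℤ) := by
    rw [hyE, Int.cast_natCast, mul_div_assoc', div_lt_iff₀ ha]
    nlinarith
  have hyq : y ≤ q := by
    refine le_of_pow_le_pow_left₀ hE (by positivity) ?_
    calc y ^ E = g / a := hyE
      _ ≤ g := div_le_self hg0.le (by linarith)
      _ ≤ q := hgq'
      _ ≤ (q : ℝ) ^ E := le_self_pow₀ hq1 hE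
  refine (card_dvd_eval_range_le_div hf hl (by positivity) hgy hyq).trans_eq ?_
  rw [hy, Real.div_rpow hg0.le ha.le, Real.rpow_neg hg0.le]
  field_simp

end RootCounting

section SingularSeries

open Polynomial

theorem card_filter_range_product_eq_sum (q : ℕ) (c : ℕ → ℕ) {p : ℕ → ℕ → Prop}
    [∀ x, DecidablePred (p x)] (hp : ∀ x, Function.Periodic (p x) q) :
    #{a ∈ Finset.range q ×ˢ Finset.range q | p a.1 a.2} =
      ∑ v ∈ Finset.range q, #{x ∈ Finset.range q | p x (v + c x)} := by
  simp only [Finset.card_filter, Finset.sum_product]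
  rw [Finset.sum_comm (s := Finset.range q) (t := Finset.range q)
    (f := fun v x => if p x (v + c x) then 1 else 0)]
  refine Finset.sum_congr rfl fun x _ => ?_
  simp only [← Finset.card_filter]
  rw [← Nat.count_eq_card_filter_range, ← Nat.filter_Ico_card_eq_of_periodic (c x) q _ (hp x)]
  refine Finset.card_nbij' (· - c x) (· + c x) ?_ ?_ ?_ ?_ <;> intro y hy <;>
    simp only [coe_filter, Set.mem_ofPred_eq, Finset.mem_Ico, Finset.mem_range] at hy ⊢
  · rw [Nat.sub_add_cancel hy.1.1]
    exact ⟨by omega, hy.2⟩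
  · exact ⟨by omega, hy.2⟩
  · omega
  · omega

variable {s : ℕ} {M₁ M₂ : Matrix (Fin s) (Fin s) ℤ}

theorem periodic_dvd_det_pencil {g q : ℕ} (hgq : g ∣ q) (x : ℕ) :
    Function.Periodic (fun y : ℕ => (g : ℤ) ∣ (pencil M₁ M₂ (x : ℤ) y).det) q := by
  intro y
  have hq : (q : ZMod g) = 0 := (ZMod.natCast_eq_zero_iff q g).mpr hgq
  simp [← ZMod.intCast_zmod_eq_zero_iff_dvd, intCast_det_pencil, hq]

theorem eval_det_X_smul_add (A B : Matrix (Fin s) (Fin s) ℤ) (t : ℤ) :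
    (((X : ℤ[X]) • A.map C + B.map C).det).eval t = (t • A + B).det := by
  rw [← coe_evalRingHom, RingHom.map_det]
  congr 1
  ext i j
  simp [-zsmul_eq_mul]

theorem NonsingularPair.exists_card_dvd_det_pencil_le (hns : NonsingularPair s M₁ M₂)
    (hM₁ : M₁.IsSymm) (hM₂ : M₂.IsSymm) :
    ∃ K δ : ℝ, 0 ≤ K ∧ 0 < δ ∧ ∀ q g : ℕ, 0 < q → g ∣ q →
      (#{a ∈ Finset.range q ×ˢ Finset.range q | (g : ℤ) ∣ (pencil M₁ M₂ (a.1 : ℤ) a.2).det} : ℝ) ≤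
        K * (q : ℝ) ^ 2 * (g : ℝ) ^ (-δ) := by
  obtain ⟨t₀, ht₀⟩ := hns.exists_det_pencil_one_natCast_ne_zero hM₁ hM₂
  obtain ⟨K, δ, hK, hδ, hcard⟩ := exists_card_dvd_eval_range_le s ht₀
  refine ⟨K, δ, hK, hδ, fun q g hq hgq => ?_⟩
  -- Along lines of slope `t₀` the determinant is a polynomial whose leading coefficient
  -- `det (M₁ + t₀ • M₂)` does not depend on the line.
  have hfibre (v : ℕ) : (#((Finset.range q).filter fun x : ℕ =>
      (g : ℤ) ∣ (pencil M₁ M₂ (x : ℤ) ((v + t₀ * x : ℕ) : ℤ)).det) : ℝ) ≤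
        K * q * (g : ℝ) ^ (-δ) := by
    let f : ℤ[X] := det ((X : ℤ[X]) • (pencil M₁ M₂ (1 : ℤ) t₀).map C +
      (pencil M₁ M₂ (0 : ℤ) v).map C)
    have hf (x : ℕ) : f.eval (x : ℤ) = (pencil M₁ M₂ (x : ℤ) ((v + t₀ * x : ℕ) : ℤ)).det := by
      rw [eval_det_X_smul_add]
      congr 1
      ext i j
      simp only [pencil, Matrix.add_apply, Matrix.smul_apply, Matrix.map_apply, smul_eq_mul,
        Int.cast_id]
      push_cast
      ring
    simp only [← hf]
    refine hcard f ?_ ?_ g q (Nat.pos_of_dvd_of_pos hgq hq) (Nat.le_of_dvd hq hgq)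
    · simpa using natDegree_det_X_add_C_le (pencil M₁ M₂ (1 : ℤ) t₀) (pencil M₁ M₂ (0 : ℤ) v)
    · simpa using coeff_det_X_add_C_card (pencil M₁ M₂ (1 : ℤ) t₀) (pencil M₁ M₂ (0 : ℤ) v)
  rw [card_filter_range_product_eq_sum q (t₀ * ·) (periodic_dvd_det_pencil hgq)]
  push_cast
  refine (Finset.sum_le_sum fun v _ => hfibre v).trans_eq ?_
  rw [Finset.sum_const, card_range, nsmul_eq_mul]
  ring

theorem sum_sqrt_gcd_le {ι : Type*} (S : Finset ι) (Δ : ι → ℤ) {q : ℕ} (hq : 0 < q) :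
    ∑ a ∈ S, √(Int.gcd (Δ a) q) ≤ ∑ g ∈ q.divisors, #{a ∈ S | (g : ℤ) ∣ Δ a} * √g := by
  have hgcd (a : ι) : √(Int.gcd (Δ a) q) ≤ ∑ g ∈ q.divisors, if (g : ℤ) ∣ Δ a then √g else 0 := by
    refine le_trans ?_ (Finset.single_le_sum (fun g _ => ?_)
      (Nat.mem_divisors.mpr ⟨Int.natCast_dvd_natCast.mp (Int.gcd_dvd_right (Δ a) q), hq.ne'⟩))
    · rw [if_pos (Int.gcd_dvd_left (Δ a) q)]
    · positivity
  refine (Finset.sum_le_sum fun a _ => hgcd a).trans_eq ?_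
  rw [Finset.sum_comm]
  refine Finset.sum_congr rfl fun g _ => ?_
  rw [← Finset.sum_filter, Finset.sum_const, nsmul_eq_mul]

theorem NonsingularPair.exists_norm_Dq_zero_le [NeZero s] (hns : NonsingularPair s M₁ M₂)
    (hM₁ : M₁.IsSymm) (hM₂ : M₂.IsSymm) :
    ∃ C δ : ℝ, 0 ≤ C ∧ 0 < δ ∧ ∀ q : ℕ, 0 < q →
      ‖Dq s M₁ M₂ q 0‖ ≤
        C * √((q : ℝ) ^ s) * (q : ℝ) ^ 2 * ∑ g ∈ q.divisors, (g : ℝ) ^ (1 / 2 - δ) := by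
  obtain ⟨C₁, hC₁, hsum⟩ := hns.exists_norm_sum_stdAddChar_pencil_le hM₁ hM₂
  obtain ⟨C₂, δ, hC₂, hδ, hcard⟩ := hns.exists_card_dvd_det_pencil_le hM₁ hM₂
  refine ⟨C₁ * C₂, δ, by positivity, hδ, fun q hq => ?_⟩
  have : NeZero q := ⟨hq.ne'⟩
  let Δ (a : ℕ × ℕ) : ℤ := (pencil M₁ M₂ (a.1 : ℤ) a.2).det
  calc ‖Dq s M₁ M₂ q 0‖
    _ ≤ ∑ a ∈ residues q, C₁ * √((q : ℝ) ^ s) * √(Int.gcd (Δ a) q) := by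
      rw [Dq_zero_eq]
      exact norm_sum_le_of_le _ (hsum q)
    _ ≤ C₁ * √((q : ℝ) ^ s) *
          ∑ a ∈ Finset.range q ×ˢ Finset.range q, √(Int.gcd (Δ a) q) := by
      rw [← Finset.mul_sum]
      gcongr
      exact Finset.filter_subset _ _
    _ ≤ C₁ * √((q : ℝ) ^ s) * ∑ g ∈ q.divisors,
          #{a ∈ Finset.range q ×ˢ Finset.range q | (g : ℤ) ∣ Δ a} * √g := by
      gcongr
      exact sum_sqrt_gcd_le _ _ hq
    _ ≤ C₁ * √((q : ℝ) ^ s) * ∑ g ∈ q.divisors, C₂ * (q : ℝ) ^ 2 * (g : ℝ) ^ (-δ) * √g := by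
      gcongr with g hg
      exact hcard q g hq (Nat.dvd_of_mem_divisors hg)
    _ = _ := by
      rw [Finset.mul_sum, Finset.mul_sum]
      refine Finset.sum_congr rfl fun g hg => ?_
      have hg0 : (0 : ℝ) < g := by exact_mod_cast Nat.pos_of_mem_divisors hg
      rw [sub_eq_add_neg, Real.rpow_add hg0, ← Real.sqrt_eq_rpow]
      ring

theorem summable_sum_divisorsAntidiagonal_mul {u v : ℕ → ℝ} (hu : Summable u) (hv : Summable v)
    (hu0 : 0 ≤ u) (hv0 : 0 ≤ v) :
    Summable fun q : ℕ => ∑ d ∈ q.divisorsAntidiagonal, u d.1 * v d.2 := by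
  have hinj : Function.Injective
      (fun x : (Σ q : ℕ, {d // d ∈ q.divisorsAntidiagonal}) => (x.2 : ℕ × ℕ)) := by
    rintro ⟨q, d, hd⟩ ⟨q', d', hd'⟩ hdd
    obtain rfl : d = d' := hdd
    obtain rfl : q = q' :=
      (Nat.mem_divisorsAntidiagonal.mp hd).1.symm.trans (Nat.mem_divisorsAntidiagonal.mp hd').1
    rfl
  refine ((hu.mul_of_nonneg hv hu0 hv0).comp_injective hinj).sigma.congr fun q => ?_
  rw [tsum_fintype, Finset.univ_eq_attach]
  exact Finset.sum_attach q.divisorsAntidiagonal fun d => u d.1 * v d.2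

theorem rpow_mul_sum_divisors_rpow {q : ℕ} (hq : 0 < q) (a b : ℝ) :
    (q : ℝ) ^ a * ∑ g ∈ q.divisors, (g : ℝ) ^ b =
      ∑ d ∈ q.divisorsAntidiagonal, (d.1 : ℝ) ^ (a + b) * (d.2 : ℝ) ^ a := by
  have hsum := Nat.sum_divisorsAntidiagonal (n := q) fun g _ : ℕ => (g : ℝ) ^ b
  rw [← hsum, Finset.mul_sum]
  refine Finset.sum_congr rfl fun d hd => ?_
  obtain ⟨hdq, -⟩ := Nat.mem_divisorsAntidiagonal.mp hd
  subst hdq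
  have hd0 : (0 : ℝ) < d.1 := by exact_mod_cast Nat.pos_of_mul_pos_right hq
  rw [Nat.cast_mul, Real.mul_rpow hd0.le (Nat.cast_nonneg _), Real.rpow_add hd0]
  ring

theorem zpow_neg_mul_sqrt_pow_mul_sq_le {s : ℕ} (hs : 7 ≤ s) {x : ℝ} (hx : 1 ≤ x) :
    x ^ (-(s : ℤ)) * (√(x ^ s) * x ^ 2) ≤ x ^ (-(3 / 2) : ℝ) := by
  have hx0 : 0 < x := one_pos.trans_le hx
  rw [Real.sqrt_eq_rpow, ← Real.rpow_natCast, ← Real.rpow_natCast, ← Real.rpow_intCast,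
    ← Real.rpow_mul hx0.le, ← Real.rpow_add hx0, ← Real.rpow_add hx0]
  refine Real.rpow_le_rpow_of_exponent_le hx ?_
  have : (7 : ℝ) ≤ s := by exact_mod_cast hs
  push_cast
  linarith

theorem NonsingularPair.summable_norm_Dq_zero (hns : NonsingularPair s M₁ M₂) (hM₁ : M₁.IsSymm)
    (hM₂ : M₂.IsSymm) (hs : 7 ≤ s) :
    Summable fun q : ℕ => (q : ℝ) ^ (-(s : ℤ)) * ‖Dq s M₁ M₂ q 0‖ := by
  have : NeZero s := ⟨by omega⟩
  obtain ⟨C, δ, hC, hδ, hDq⟩ := hns.exists_norm_Dq_zero_le hM₁ hM₂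
  have hsum := summable_sum_divisorsAntidiagonal_mul
    (u := fun g : ℕ => (g : ℝ) ^ (-(3 / 2) + (1 / 2 - δ)))
    (v := fun m : ℕ => (m : ℝ) ^ (-(3 / 2) : ℝ))
    (Real.summable_nat_rpow.mpr (by linarith)) (Real.summable_nat_rpow.mpr (by norm_num))
    (fun g => by positivity) (fun m => by positivity)
  refine (hsum.mul_left C).of_nonneg_of_le (fun q => by positivity) fun q => ?_
  rcases Nat.eq_zero_or_pos q with rfl | hq
  · simp [this.ne]
  calc (q : ℝ) ^ (-(s : ℤ)) * ‖Dq s M₁ M₂ q 0‖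
    _ ≤ (q : ℝ) ^ (-(s : ℤ)) * (C * √((q : ℝ) ^ s) * (q : ℝ) ^ 2 *
          ∑ g ∈ q.divisors, (g : ℝ) ^ (1 / 2 - δ)) := by
      gcongr
      exact hDq q hq
    _ = C * ((q : ℝ) ^ (-(s : ℤ)) * (√((q : ℝ) ^ s) * (q : ℝ) ^ 2) *
          ∑ g ∈ q.divisors, (g : ℝ) ^ (1 / 2 - δ)) := by ring
    _ ≤ C * ((q : ℝ) ^ (-(3 / 2) : ℝ) * ∑ g ∈ q.divisors, (g : ℝ) ^ (1 / 2 - δ)) := by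
      gcongr
      exact zpow_neg_mul_sqrt_pow_mul_sq_le hs (by exact_mod_cast hq)
    _ = _ := by rw [rpow_mul_sum_divisors_rpow hq]

end SingularSeries

section Differencing

theorem e2pi_add (x y : ℝ) : e2pi (x + y) = e2pi x * e2pi y := by
  rw [e2pi, e2pi, e2pi, ← Complex.exp_add]
  push_cast
  ring_nf

theorem e2pi_zero : e2pi 0 = 1 := by
  simp [e2pi]

theorem e2pi_eq_fourierChar (x : ℝ) : e2pi x = (Real.fourierChar x : ℂ) := by
  rw [Real.fourierChar_apply, e2pi]
  push_cast
  ring_nf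

theorem norm_e2pi (x : ℝ) : ‖e2pi x‖ = 1 := by
  rw [e2pi_eq_fourierChar, Circle.norm_coe]

theorem conj_e2pi (x : ℝ) : starRingEnd ℂ (e2pi x) = e2pi (-x) := by
  rw [e2pi_eq_fourierChar, e2pi_eq_fourierChar, AddChar.map_neg_eq_inv, Circle.coe_inv_eq_conj]

theorem continuous_e2pi : Continuous e2pi := by
  unfold e2pi
  fun_prop

theorem integral_integral_mul_comp_add {G 𝕜 : Type*} [AddCommGroup G] [MeasurableSpace G]
    [MeasurableAdd₂ G] [MeasurableNeg G] [RCLike 𝕜] {μ : Measure G} [SFinite μ]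
    [μ.IsAddLeftInvariant] [μ.IsNegInvariant] {u f : G → 𝕜} (hu : Integrable u μ)
    (hf : Integrable f μ) :
    ∫ h, ∫ x, u x * f (x + h) ∂μ ∂μ = (∫ x, u x ∂μ) * ∫ x, f x ∂μ := by
  have hconv := integral_convolution (ContinuousLinearMap.mul 𝕜 𝕜) hu.comp_neg hf
  rw [integral_neg_eq_self, ContinuousLinearMap.mul_apply'] at hconv
  rw [← hconv]
  refine integral_congr_ae (.of_forall fun h => ?_)
  rw [convolution_def, ← integral_neg_eq_self]
  simp [add_comm]

variable {ι : Type*} [Fintype ι]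

/-- The (asymmetric) ambiguity function of `w`: the inverse Fourier transform at `ξ` of the
correlation `x ↦ conj (w x) * w (x + h)` of `w` with its translate by `h`. -/
noncomputable def ambiguity (w : (ι → ℝ) → ℂ) (h ξ : ι → ℝ) : ℂ :=
  ∫ x, starRingEnd ℂ (w x) * w (x + h) * e2pi (ξ ⬝ᵥ x)

theorem integrable_mul_e2pi_comp {α : Type*} [TopologicalSpace α] [MeasurableSpace α]
    [OpensMeasurableSpace α] {μ : Measure α} {w : α → ℂ} (hw : Integrable w μ) {φ : α → ℝ}
    (hφ : Continuous φ) : Integrable (fun x => w x * e2pi (φ x)) μ :=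
  hw.mul_bdd (c := 1) (continuous_e2pi.comp hφ).aestronglyMeasurable
    (.of_forall fun _ => (norm_e2pi _).le)

theorem sq_norm_integral_mul_e2pi_dotProduct_mulVec_le {w : (ι → ℝ) → ℂ} (hw : Integrable w)
    {M : Matrix ι ι ℝ} (hM : M.IsSymm) :
    ‖∫ x, w x * e2pi (x ⬝ᵥ M *ᵥ x)‖ ^ 2 ≤ ∫ h, ‖ambiguity w h (M *ᵥ (2 • h))‖ := by
  have hint : Integrable fun x => w x * e2pi (x ⬝ᵥ M *ᵥ x) :=
    integrable_mul_e2pi_comp hw (by fun_prop)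
  have hconj : Integrable fun x => starRingEnd ℂ (w x * e2pi (x ⬝ᵥ M *ᵥ x)) :=
    Complex.conjCLE.toContinuousLinearMap.integrable_comp hint
  have hcorr (h : ι → ℝ) :
      ∫ x, starRingEnd ℂ (w x * e2pi (x ⬝ᵥ M *ᵥ x)) *
        (w (x + h) * e2pi ((x + h) ⬝ᵥ M *ᵥ (x + h))) =
      e2pi (h ⬝ᵥ M *ᵥ h) * ambiguity w h (M *ᵥ (2 • h)) := by
    rw [ambiguity, ← integral_const_mul]
    refine integral_congr_ae (.of_forall fun x => ?_)
    have hphase : e2pi (-(x ⬝ᵥ M *ᵥ x)) * e2pi (x ⬝ᵥ M *ᵥ x) = 1 := by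
      rw [← e2pi_add, neg_add_cancel, e2pi_zero]
    simp only [map_mul, conj_e2pi, dotProduct_mulVec_add_self hM, e2pi_add]
    linear_combination (starRingEnd ℂ (w x) * w (x + h) * e2pi (h ⬝ᵥ M *ᵥ h) *
      e2pi ((M *ᵥ (2 • h)) ⬝ᵥ x)) * hphase
  calc ‖∫ x, w x * e2pi (x ⬝ᵥ M *ᵥ x)‖ ^ 2
    _ = ‖∫ h, e2pi (h ⬝ᵥ M *ᵥ h) * ambiguity w h (M *ᵥ (2 • h))‖ := by
      simp only [← hcorr]
      rw [integral_integral_mul_comp_add hconj hint, integral_conj, norm_mul, RCLike.norm_conj, sq]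
    _ ≤ ∫ h, ‖e2pi (h ⬝ᵥ M *ᵥ h) * ambiguity w h (M *ᵥ (2 • h))‖ :=
      norm_integral_le_integral_norm _
    _ = ∫ h, ‖ambiguity w h (M *ᵥ (2 • h))‖ := by simp only [norm_mul, norm_e2pi, one_mul]

end Differencing

section AmbiguityDecay

theorem exists_integral_norm_iteratedFDeriv_mul_comp_add_le {V A : Type*} [NormedAddCommGroup V]
    [NormedSpace ℝ V] [MeasurableSpace V] [OpensMeasurableSpace V] {μ : Measure V}
    [IsFiniteMeasureOnCompacts μ] [NormedRing A] [NormedAlgebra ℝ A] {u v : V → A} {n : ℕ}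
    (hu : ContDiff ℝ n u) (hu_supp : HasCompactSupport u) (hv : ContDiff ℝ n v)
    (hv_supp : HasCompactSupport v) {p : ℕ} (hp : p ≤ n) :
    ∃ B : ℝ, ∀ h, ∫ x, ‖iteratedFDeriv ℝ p (fun x => u x * v (x + h)) x‖ ∂μ ≤ B := by
  have hle {i : ℕ} (hi : i ≤ p) : (i : WithTop ℕ∞) ≤ n := by exact_mod_cast hi.trans hp
  have hbdd (i : ℕ) (hi : i ≤ p) : ∃ C, ∀ x, ‖iteratedFDeriv ℝ i v x‖ ≤ C :=
    (hv.continuous_iteratedFDeriv (hle hi)).bounded_above_of_compact_support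
      (hv_supp.iteratedFDeriv i)
  choose! C hC using hbdd
  have hint : ∀ i ∈ Finset.range (p + 1), Integrable
      (fun x => (p.choose i : ℝ) * ‖iteratedFDeriv ℝ i u x‖ * C (p - i)) μ := fun i hi =>
    ((((hu.continuous_iteratedFDeriv (hle (Finset.mem_range_succ_iff.mp hi)))
      |>.integrable_of_hasCompactSupport (hu_supp.iteratedFDeriv i)).norm.const_mul _).mul_const _)
  refine ⟨∫ x, ∑ i ∈ Finset.range (p + 1),
    (p.choose i : ℝ) * ‖iteratedFDeriv ℝ i u x‖ * C (p - i) ∂μ, fun h => ?_⟩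
  refine integral_mono_of_nonneg (.of_forall fun x => norm_nonneg _)
    (integrable_finsetSum _ hint) (.of_forall fun x => ?_)
  have hvh : ContDiff ℝ n fun x => v (x + h) := hv.comp (contDiff_id.add contDiff_const)
  refine (norm_iteratedFDeriv_mul_le hu hvh x (hle le_rfl)).trans ?_
  refine Finset.sum_le_sum fun i _ => ?_
  rw [iteratedFDeriv_comp_add_right]
  gcongr
  exact hC _ (Nat.sub_le p i) _

variable {ι : Type*} [Fintype ι]

theorem norm_pow_mul_norm_integral_mul_e2pi_dotProduct_le [Nonempty ι] {n : ℕ}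
    {G : (ι → ℝ) → ℂ} (hG : ContDiff ℝ n G) (hG_supp : HasCompactSupport G) (ξ : ι → ℝ) :
    ‖ξ‖ ^ n * ‖∫ x, G x * e2pi (ξ ⬝ᵥ x)‖ ≤
      2 ^ n * ∑ p ∈ Finset.range (n + 1), ∫ x, ‖iteratedFDeriv ℝ p G x‖ := by
  classical
  obtain ⟨j, hj⟩ := Finite.exists_max fun i => ‖ξ i‖
  have hξ : ‖ξ‖ = |ξ j| :=
    le_antisymm ((pi_norm_le_iff_of_nonempty _).mpr hj) (norm_le_pi_norm ξ j)
  let L := (dotProductBilin ℝ ℝ : (ι → ℝ) →ₗ[ℝ] (ι → ℝ) →ₗ[ℝ] ℝ).toContinuousBilinearMap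
  have hint (k m : ℕ) (_ : (k : ℕ∞) ≤ 0) (hm : (m : ℕ∞) ≤ n) :
      Integrable fun v => ‖v‖ ^ k * ‖iteratedFDeriv ℝ m G v‖ := by
    have hc : Continuous (iteratedFDeriv ℝ m G) :=
      hG.continuous_iteratedFDeriv (by exact_mod_cast hm)
    exact Continuous.integrable_of_hasCompactSupport (by fun_prop)
      ((hG_supp.iteratedFDeriv m).norm.mul_left)
  have hfourier : VectorFourier.fourierIntegral Real.fourierChar volume L.toLinearMap₁₂ G (-ξ) =
      ∫ x, G x * e2pi (ξ ⬝ᵥ x) := by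
    refine integral_congr_ae (.of_forall fun x => ?_)
    have hx : L.toLinearMap₁₂ x (-ξ) = -(ξ ⬝ᵥ x) :=
      (dotProduct_neg x ξ).trans (by rw [dotProduct_comm])
    simp only [hx, neg_neg, Circle.smul_def, e2pi_eq_fourierChar, smul_eq_mul, mul_comm]
  have hbound := VectorFourier.pow_mul_norm_iteratedFDeriv_fourierIntegral_le (μ := volume) L
    (K := 0) (N := n) (k := 0) (n := n) hG hint le_rfl le_rfl (Pi.single j 1) (-ξ)
  have hL : L (Pi.single j 1) (-ξ) = -ξ j := single_one_dotProduct j (-ξ)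
  rw [norm_iteratedFDeriv_zero, hL, hfourier, abs_neg, ← hξ, Pi.norm_single, norm_one] at hbound
  simpa using hbound

variable {w : (ι → ℝ) → ℂ}

theorem ambiguity_eq_zero_of_two_mul_lt_norm {R : ℝ} (hR : ∀ x ∈ tsupport w, ‖x‖ ≤ R)
    {h : ι → ℝ} (hh : 2 * R < ‖h‖) (ξ : ι → ℝ) : ambiguity w h ξ = 0 := by
  refine integral_eq_zero_of_ae (.of_forall fun x => ?_)
  by_contra hne
  simp only [Pi.zero_apply, mul_eq_zero, not_or, map_eq_zero] at hne
  have hx := hR _ (subset_tsupport _ hne.1.1)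
  have hxh := hR _ (subset_tsupport _ hne.1.2)
  have htri := norm_sub_le (x + h) x
  rw [add_sub_cancel_left] at htri
  linarith

theorem exists_norm_pow_mul_norm_ambiguity_le [Nonempty ι] {n : ℕ} (hw : ContDiff ℝ n w)
    (hw_supp : HasCompactSupport w) :
    ∃ K : ℝ, ∀ h ξ, ‖ξ‖ ^ n * ‖ambiguity w h ξ‖ ≤ K := by
  have hconj : ContDiff ℝ n fun x => starRingEnd ℂ (w x) := Complex.conjCLE.contDiff.comp hw
  have hconj_supp : HasCompactSupport fun x => starRingEnd ℂ (w x) :=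
    hw_supp.comp_left (map_zero (starRingEnd ℂ))
  choose! B hB using fun (p : ℕ) (hp : p ≤ n) =>
    exists_integral_norm_iteratedFDeriv_mul_comp_add_le (μ := volume) hconj hconj_supp hw hw_supp hp
  refine ⟨2 ^ n * ∑ p ∈ Finset.range (n + 1), B p, fun h ξ => ?_⟩
  refine (norm_pow_mul_norm_integral_mul_e2pi_dotProduct_le
    (hconj.mul (hw.comp (contDiff_id.add contDiff_const))) hconj_supp.mul_right ξ).trans ?_
  gcongr with p hp
  exact hB p (Finset.mem_range_succ_iff.mp hp) h

theorem exists_one_add_norm_pow_mul_norm_ambiguity_le [Nonempty ι] {n : ℕ}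
    (hw : ContDiff ℝ n w) (hw_supp : HasCompactSupport w) :
    ∃ C : ℝ, ∀ h ξ, (1 + ‖(h, ξ)‖) ^ n * ‖ambiguity w h ξ‖ ≤ C := by
  obtain ⟨K₀, hK₀⟩ := exists_norm_pow_mul_norm_ambiguity_le
    (hw.of_le (zero_le : (0 : WithTop ℕ∞) ≤ n)) hw_supp
  obtain ⟨K, hK⟩ := exists_norm_pow_mul_norm_ambiguity_le hw hw_supp
  obtain ⟨R, hR0, hR⟩ := hw_supp.isCompact.isBounded.exists_pos_norm_le
  have hK₀' (h ξ : ι → ℝ) : ‖ambiguity w h ξ‖ ≤ K₀ := by simpa using hK₀ h ξ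
  refine ⟨2 ^ (n - 1) * ((1 + 2 * R) ^ n * K₀ + K), fun h ξ => ?_⟩
  rcases lt_or_ge (2 * R) ‖h‖ with hh | hh
  · rw [ambiguity_eq_zero_of_two_mul_lt_norm hR hh, norm_zero, mul_zero]
    have hK₀0 : 0 ≤ K₀ := (norm_nonneg _).trans (hK₀' 0 0)
    have hK0 : 0 ≤ K := le_trans (by positivity) (hK 0 0)
    positivity
  have hnorm : 1 + ‖(h, ξ)‖ ≤ (1 + 2 * R) + ‖ξ‖ := by
    rw [add_assoc]
    gcongr
    exact max_le (by linarith [norm_nonneg ξ]) (by linarith)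
  calc (1 + ‖(h, ξ)‖) ^ n * ‖ambiguity w h ξ‖
    _ ≤ 2 ^ (n - 1) * ((1 + 2 * R) ^ n + ‖ξ‖ ^ n) * ‖ambiguity w h ξ‖ := by
      gcongr
      exact (pow_le_pow_left₀ (by positivity) hnorm n).trans
        (add_pow_le (by positivity) (norm_nonneg ξ) n)
    _ = 2 ^ (n - 1) * ((1 + 2 * R) ^ n * ‖ambiguity w h ξ‖ + ‖ξ‖ ^ n * ‖ambiguity w h ξ‖) := by
      ring
    _ ≤ 2 ^ (n - 1) * ((1 + 2 * R) ^ n * K₀ + K) := by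
      gcongr
      · exact hK₀' h ξ
      · exact hK h ξ

end AmbiguityDecay

section SingularIntegral

theorem integrable_and_abs_det_smul_integral_comp_linearMap {E F : Type*} [NormedAddCommGroup E]
    [NormedSpace ℝ E] [FiniteDimensional ℝ E] [MeasurableSpace E] [BorelSpace E]
    [NormedAddCommGroup F] [NormedSpace ℝ F] {μ : Measure E} [μ.IsAddHaarMeasure] {f : E →ₗ[ℝ] E}
    (hf : LinearMap.det f ≠ 0) {g : E → F} (hg : Integrable g μ) :
    Integrable (fun x => g (f x)) μ ∧ |LinearMap.det f| • ∫ x, g (f x) ∂μ = ∫ x, g x ∂μ := by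
  have hmap := Measure.map_linearMap_addHaar_eq_smul_addHaar μ hf
  have hmeas : Measurable f := f.continuous_of_finiteDimensional.measurable
  have hgf : Integrable g (μ.map f) := by
    rw [hmap]
    exact hg.smul_measure ENNReal.ofReal_ne_top
  refine ⟨hgf.comp_measurable hmeas, ?_⟩
  rw [← integral_map hmeas.aemeasurable hgf.aestronglyMeasurable, hmap, integral_smul_measure,
    ENNReal.toReal_ofReal (abs_nonneg _), abs_inv, smul_inv_smul₀ (abs_ne_zero.mpr hf)]

theorem norm_updateRow_single_mulVec_le {ι : Type*} [Fintype ι] [DecidableEq ι]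
    (M : Matrix ι ι ℝ) (k l : ι) (h : ι → ℝ) :
    ‖M.updateRow l (Pi.single k 1) *ᵥ h‖ ≤ ‖(h, M *ᵥ (2 • h))‖ := by
  rw [updateRow_mulVec, single_one_dotProduct]
  refine (pi_norm_le_iff_of_nonneg (norm_nonneg _)).mpr fun i => ?_
  rcases eq_or_ne i l with rfl | hi
  · rw [Function.update_self]
    exact (norm_le_pi_norm h k).trans (le_max_left _ _)
  · rw [Function.update_of_ne hi]
    refine ((norm_le_pi_norm (M *ᵥ h) i).trans ?_).trans (le_max_right _ _)
    rw [mulVec_smul, two_nsmul, ← two_smul ℝ, norm_smul, Real.norm_two]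
    linarith [norm_nonneg (M *ᵥ h)]

theorem exists_norm_ambiguity_mulVec_le {ι : Type*} [Fintype ι] [DecidableEq ι]
    [Nonempty ι] {w : (ι → ℝ) → ℂ} {n : ℕ} (hw : ContDiff ℝ n w) (hw_supp : HasCompactSupport w) :
    ∃ C ≥ 0, ∀ (M : Matrix ι ι ℝ) (k l : ι) (h : ι → ℝ),
      ‖ambiguity w h (M *ᵥ (2 • h))‖ ≤
        C * (1 + ‖M.updateRow l (Pi.single k 1) *ᵥ h‖) ^ (-n : ℝ) := by
  obtain ⟨C, hC⟩ := exists_one_add_norm_pow_mul_norm_ambiguity_le hw hw_supp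
  refine ⟨C, le_trans (by positivity) (hC 0 0), fun M k l h => ?_⟩
  rw [Real.rpow_neg (by positivity), Real.rpow_natCast, ← div_eq_mul_inv,
    le_div_iff₀ (by positivity), mul_comm]
  refine le_trans ?_ (hC h (M *ᵥ (2 • h)))
  gcongr
  exact norm_updateRow_single_mulVec_le M k l h

theorem exists_abs_adjugate_mul_sq_norm_integral_le {ι : Type*} [Fintype ι] [DecidableEq ι]
    [Nonempty ι] {w : (ι → ℝ) → ℂ} (hw : ContDiff ℝ (Fintype.card ι + 1 : ℕ) w)
    (hw_supp : HasCompactSupport w) :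
    ∃ C : ℝ, ∀ M : Matrix ι ι ℝ, M.IsSymm → ∀ k l,
      |M.adjugate k l| * ‖∫ x, w x * e2pi (x ⬝ᵥ M *ᵥ x)‖ ^ 2 ≤ C := by
  obtain ⟨C, hC0, hC⟩ := exists_norm_ambiguity_mulVec_le hw hw_supp
  let P (y : ι → ℝ) : ℝ := (1 + ‖y‖) ^ (-(Fintype.card ι + 1 : ℕ) : ℝ)
  have hP : Integrable P := integrable_one_add_norm (by simp)
  refine ⟨C * ∫ y, P y, fun M hM k l => ?_⟩
  rcases eq_or_ne (M.adjugate k l) 0 with h0 | h0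
  · rw [h0, abs_zero, zero_mul]
    exact mul_nonneg hC0 (integral_nonneg fun y => by positivity)
  -- Cofactor expansion exhibits the minor as the Jacobian of `h ↦ A *ᵥ h`.
  let A : Matrix ι ι ℝ := M.updateRow l (Pi.single k 1)
  have hdet : LinearMap.det (toLin' A) = M.adjugate k l := by
    rw [LinearMap.det_toLin', adjugate_apply]
  obtain ⟨hPA, hPA_eq⟩ := integrable_and_abs_det_smul_integral_comp_linearMap (hdet ▸ h0) hP
  calc |M.adjugate k l| * ‖∫ x, w x * e2pi (x ⬝ᵥ M *ᵥ x)‖ ^ 2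
    _ ≤ |M.adjugate k l| * ∫ h, ‖ambiguity w h (M *ᵥ (2 • h))‖ := by
      gcongr
      exact sq_norm_integral_mul_e2pi_dotProduct_mulVec_le
        (hw.continuous.integrable_of_hasCompactSupport hw_supp) hM
    _ ≤ |M.adjugate k l| * ∫ h, C * P (A *ᵥ h) := by
      refine mul_le_mul_of_nonneg_left ?_ (abs_nonneg _)
      exact integral_mono_of_nonneg (.of_forall fun h => norm_nonneg _) (hPA.const_mul C)
        (.of_forall (hC M k l))
    _ = C * ∫ y, P y := by
      rw [← hPA_eq, hdet, integral_const_mul, smul_eq_mul, mul_left_comm]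
      rfl

theorem exists_mul_norm_pow_le_of_homogeneous {E : Type*} [NormedAddCommGroup E] [NormedSpace ℝ E]
    [ProperSpace E] [Nontrivial E] {φ : E → ℝ} {n : ℕ} (hφ : Continuous φ)
    (hpos : ∀ x ≠ 0, 0 < φ x) (hhom : ∀ t ≥ (0 : ℝ), ∀ x, φ (t • x) = t ^ n * φ x) :
    ∃ c > 0, ∀ x, c * ‖x‖ ^ n ≤ φ x := by
  obtain ⟨y, hy, hmin⟩ := (isCompact_sphere (0 : E) 1).exists_isMinOn
    (NormedSpace.sphere_nonempty.mpr zero_le_one) hφ.continuousOn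
  refine ⟨φ y, hpos y (ne_zero_of_mem_unit_sphere ⟨y, hy⟩), fun x => ?_⟩
  obtain ⟨u, hu, hxu⟩ : ∃ u ∈ Metric.sphere (0 : E) 1, ‖x‖ • u = x := by
    rcases eq_or_ne x 0 with rfl | hx
    · exact ⟨y, hy, by simp⟩
    · exact ⟨‖x‖⁻¹ • x, by simp [norm_smul, hx], smul_inv_smul₀ (norm_ne_zero_iff.mpr hx) x⟩
  calc φ y * ‖x‖ ^ n
    _ ≤ ‖x‖ ^ n * φ u := by
      rw [mul_comm]
      gcongr
      exact hmin hu
    _ = φ x := by rw [← hhom _ (norm_nonneg x), hxu]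

theorem integrable_of_norm_pow_mul_norm_pow_le {E F : Type*} [NormedAddCommGroup E]
    [NormedSpace ℝ E] [FiniteDimensional ℝ E] [MeasurableSpace E] [BorelSpace E]
    [NormedAddCommGroup F] {μ : Measure E} [μ.IsAddHaarMeasure] {f : E → F}
    (hf : AEStronglyMeasurable f μ) {B C : ℝ} {m n : ℕ} (hm : m ≠ 0) (hB : ∀ x, ‖f x‖ ≤ B)
    (hC : ∀ x, ‖x‖ ^ n * ‖f x‖ ^ m ≤ C) (hmn : m * Module.finrank ℝ E < n) : Integrable f μ := by
  have hdecay (x : E) : ‖f x‖ ^ m ≤ 2 ^ (n - 1) * (B ^ m + C) * (1 + ‖x‖) ^ (-n : ℝ) := by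
    rw [Real.rpow_neg (by positivity), Real.rpow_natCast, ← div_eq_mul_inv,
      le_div_iff₀ (by positivity)]
    calc ‖f x‖ ^ m * (1 + ‖x‖) ^ n
      _ ≤ ‖f x‖ ^ m * (2 ^ (n - 1) * (1 ^ n + ‖x‖ ^ n)) := by
        gcongr
        exact add_pow_le zero_le_one (norm_nonneg x) n
      _ = 2 ^ (n - 1) * (‖f x‖ ^ m + ‖x‖ ^ n * ‖f x‖ ^ m) := by ring
      _ ≤ 2 ^ (n - 1) * (B ^ m + C) := by
        gcongr
        · exact hB x
        · exact hC x
  have hm0 : (0 : ℝ) < m := by exact_mod_cast Nat.pos_of_ne_zero hm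
  have hint : Integrable (fun x : E => (1 + ‖x‖) ^ (-(n / m) : ℝ)) μ :=
    integrable_one_add_norm (by
      rw [lt_div_iff₀' hm0]
      exact_mod_cast hmn)
  refine (hint.const_mul ((2 ^ (n - 1) * (B ^ m + C)) ^ (m : ℝ)⁻¹)).mono' hf
    (.of_forall fun x => ?_)
  have hK : 0 ≤ 2 ^ (n - 1) * (B ^ m + C) := by
    have hB0 := (norm_nonneg _).trans (hB 0)
    have hC0 : 0 ≤ C := le_trans (by positivity) (hC 0)
    positivity
  calc ‖f x‖
    _ = (‖f x‖ ^ m) ^ (m : ℝ)⁻¹ := (Real.pow_rpow_inv_natCast (norm_nonneg _) hm).symm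
    _ ≤ (2 ^ (n - 1) * (B ^ m + C) * (1 + ‖x‖) ^ (-n : ℝ)) ^ (m : ℝ)⁻¹ := by
      gcongr
      exact hdecay x
    _ = (2 ^ (n - 1) * (B ^ m + C)) ^ (m : ℝ)⁻¹ * (1 + ‖x‖) ^ (-(n / m) : ℝ) := by
      rw [Real.mul_rpow hK (by positivity), ← Real.rpow_mul (by positivity)]
      ring_nf

theorem norm_integral_mul_e2pi_le {α : Type*} [MeasurableSpace α] {μ : Measure α} (w : α → ℂ)
    (φ : α → ℝ) : ‖∫ x, w x * e2pi (φ x) ∂μ‖ ≤ ∫ x, ‖w x‖ ∂μ := by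
  refine (norm_integral_le_integral_norm _).trans_eq ?_
  simp only [norm_mul, norm_e2pi, mul_one]

theorem continuous_integral_mul_e2pi {X α : Type*} [TopologicalSpace X] [FirstCountableTopology X]
    [TopologicalSpace α] [MeasurableSpace α] [OpensMeasurableSpace α] {μ : Measure α} {w : α → ℂ}
    (hw : Integrable w μ) {φ : X → α → ℝ} (hφ : Continuous (Function.uncurry φ)) :
    Continuous fun t => ∫ x, w x * e2pi (φ t x) ∂μ := by
  refine continuous_of_dominated (bound := fun x => ‖w x‖)
    (fun t => (integrable_mul_e2pi_comp hw (hφ.uncurry_left t)).aestronglyMeasurable)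
    (fun t => .of_forall fun x => ?_) hw.norm (.of_forall fun x => ?_)
  · rw [norm_mul, norm_e2pi, mul_one]
  · exact continuous_const.mul (continuous_e2pi.comp (hφ.uncurry_right x))

variable {s : ℕ} {M₁ M₂ : Matrix (Fin s) (Fin s) ℤ}

theorem NonsingularPair.adjugate_pencil_real_ne_zero [NeZero s] (hns : NonsingularPair s M₁ M₂)
    {α : ℝ × ℝ} (hα : α ≠ 0) : (pencil M₁ M₂ α.1 α.2).adjugate ≠ 0 := by
  intro hadj
  have hcoprime : IsCoprime (α.1 : ℂ) (α.2 : ℂ) := by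
    by_cases h : α.1 = 0
    · have h' : α.2 ≠ 0 := fun h' => hα (Prod.ext h h')
      exact ⟨0, (α.2 : ℂ)⁻¹, by simp [h']⟩
    · exact ⟨(α.1 : ℂ)⁻¹, 0, by simp [h]⟩
  refine hns.adjugate_pencil_ne_zero hcoprime ?_
  have hmap := Complex.ofRealHom.map_adjugate (pencil M₁ M₂ α.1 α.2)
  rw [hadj, map_zero, RingHom.mapMatrix_apply, pencil_map] at hmap
  exact hmap.symm

theorem NonsingularPair.exists_mul_norm_pow_le_sum_abs_adjugate [NeZero s]
    (hns : NonsingularPair s M₁ M₂) :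
    ∃ c > 0, ∀ α : ℝ × ℝ,
      c * ‖α‖ ^ (s - 1) ≤ ∑ p : Fin s × Fin s, |(pencil M₁ M₂ α.1 α.2).adjugate p.1 p.2| := by
  refine exists_mul_norm_pow_le_of_homogeneous ?_ (fun α hα => ?_) fun t ht α => ?_
  · have hadj : Continuous fun α : ℝ × ℝ => (pencil M₁ M₂ α.1 α.2).adjugate := by
      unfold pencil
      exact Continuous.matrix_adjugate (by fun_prop)
    exact continuous_finsetSum _ fun p _ => (hadj.matrix_elem p.1 p.2).abs
  · have hne := hns.adjugate_pencil_real_ne_zero hα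
    obtain ⟨k, l, hkl⟩ : ∃ k l, (pencil M₁ M₂ α.1 α.2).adjugate k l ≠ 0 := by
      by_contra! h
      exact hne (Matrix.ext h)
    exact Finset.sum_pos' (fun p _ => abs_nonneg _) ⟨(k, l), mem_univ _, abs_pos.mpr hkl⟩
  · have hsmul : pencil M₁ M₂ (t • α).1 (t • α).2 = t • pencil M₁ M₂ α.1 α.2 := by
      simp [pencil, smul_smul, smul_add]
    simp only [hsmul, adjugate_smul, Fintype.card_fin, Matrix.smul_apply, smul_eq_mul, abs_mul,
      abs_pow, abs_of_nonneg ht, Finset.mul_sum]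

theorem NonsingularPair.integrable_integral_mul_e2pi (hns : NonsingularPair s M₁ M₂)
    (hM₁ : M₁.IsSymm) (hM₂ : M₂.IsSymm) (hs : 6 ≤ s) {w : (Fin s → ℝ) → ℂ}
    (hw : ContDiff ℝ (s + 1 : ℕ) w) (hw_supp : HasCompactSupport w) :
    Integrable fun α : ℝ × ℝ =>
      ∫ x, w x * e2pi (α.1 * quadEval M₁ x + α.2 * quadEval M₂ x) := by
  have : NeZero s := ⟨by omega⟩
  have hw_int := hw.continuous.integrable_of_hasCompactSupport (μ := volume) hw_supp
  obtain ⟨c, hc, hadj⟩ := hns.exists_mul_norm_pow_le_sum_abs_adjugate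
  obtain ⟨C, hC⟩ := exists_abs_adjugate_mul_sq_norm_integral_le (by simpa using hw) hw_supp
  simp only [← dotProduct_pencil_mulVec]
  let J (α : ℝ × ℝ) : ℂ := ∫ x, w x * e2pi (x ⬝ᵥ pencil M₁ M₂ α.1 α.2 *ᵥ x)
  have hJ : Continuous J := by
    refine continuous_integral_mul_e2pi hw_int ?_
    unfold pencil
    fun_prop
  refine integrable_of_norm_pow_mul_norm_pow_le hJ.aestronglyMeasurable two_ne_zero
    (fun α => norm_integral_mul_e2pi_le w _) (n := s - 1)
    (C := Fintype.card (Fin s × Fin s) * C / c) (fun α => ?_) ?_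
  · rw [le_div_iff₀' hc]
    calc c * (‖α‖ ^ (s - 1) * ‖J α‖ ^ 2)
      _ ≤ (∑ p : Fin s × Fin s, |(pencil M₁ M₂ α.1 α.2).adjugate p.1 p.2|) * ‖J α‖ ^ 2 := by
        rw [← mul_assoc]
        gcongr
        exact hadj α
      _ ≤ ∑ _p : Fin s × Fin s, C := by
        rw [Finset.sum_mul]
        exact Finset.sum_le_sum fun p _ => hC _ (pencil_isSymm hM₁ hM₂ _ _) p.1 p.2
      _ = Fintype.card (Fin s × Fin s) * C := by simp
  · rw [Module.finrank_prod, Module.finrank_self]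
    omega

end SingularIntegral

theorem statement19_general (s : ℕ) (M₁ M₂ : Matrix (Fin s) (Fin s) ℤ)
    (hM₁ : M₁.IsSymm) (hM₂ : M₂.IsSymm) (hns : NonsingularPair s M₁ M₂)
    (w : (Fin s → ℝ) → ℂ) (hw : ContDiff ℝ (s + 1 : ℕ) w) (hw_supp : HasCompactSupport w) :
    (7 ≤ s →
      Summable (fun q : ℕ => (q : ℝ) ^ (-(s : ℤ)) * ‖Dq s M₁ M₂ q 0‖)) ∧
    (6 ≤ s →
      Integrable (fun α : ℝ × ℝ =>
        ∫ x : Fin s → ℝ, w x * e2pi (α.1 * quadEval M₁ x + α.2 * quadEval M₂ x))) :=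
  ⟨fun hs => hns.summable_norm_Dq_zero hM₁ hM₂ hs,
    fun hs => hns.integrable_integral_mul_e2pi hM₁ hM₂ hs hw hw_supp⟩

/-- absolute convergence of the singular series (`s ≥ 7`) and of the
singular integral (`s ≥ 6`). -/
theorem statement19 (s : ℕ) (M₁ M₂ : Matrix (Fin s) (Fin s) ℤ)
    (hM₁ : M₁.IsSymm) (hM₂ : M₂.IsSymm) (hns : NonsingularPair s M₁ M₂)
    (w : (Fin s → ℝ) → ℝ) (hw_smooth : ContDiff ℝ (⊤ : ℕ∞) w) (hw_supp : HasCompactSupport w) :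
    (7 ≤ s →
      Summable (fun q : ℕ => (q : ℝ) ^ (-(s : ℤ)) * ‖Dq s M₁ M₂ q 0‖)) ∧
    (6 ≤ s →
      Integrable (fun α : ℝ × ℝ =>
        ∫ x : Fin s → ℝ, ((w x : ℝ) : ℂ) *
          e2pi (α.1 * quadEval M₁ x + α.2 * quadEval M₂ x))) := by
  have hw : ContDiff ℝ (s + 1 : ℕ) fun x => (w x : ℂ) :=
    Complex.ofRealCLM.contDiff.comp (hw_smooth.of_le (mod_cast le_top))
  exact statement19_general s M₁ M₂ hM₁ hM₂ hns _ hw (hw_supp.comp_left Complex.ofReal_zero)
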